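/- arXiv:2209.05820 — 4 statements merged into one kernel-verified Lean document; each statement's English description precedes it below -/
import Mathlib

section
/- If φ and φ' are order automorphisms of (D, ⊑) and φ(G) = φ'(G) for every G ∈ D with at most 12 vertices, then φ = φ'. -/
/-- A finite digraph: a finite nonempty vertex set `Fin n` with a (Bool-valued)
edge relation, loops allowed. -/
structure FinDigraph where
  n : ℕ
  pos : 0 < n
  adj : Fin n → Fin n → Bool

namespace FinDigraph

/-- Isomorphism of finite digraphs. -/
def Iso (G H : FinDigraph) : Prop :=
  ∃ e : Fin G.n ≃ Fin H.n, ∀ u v, H.adj (e u) (e v) = G.adj u v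

theorem iso_refl (G : FinDigraph) : Iso G G := ⟨Equiv.refl _, fun _ _ => rfl⟩

theorem iso_symm {G H : FinDigraph} (h : Iso G H) : Iso H G := by
  obtain ⟨e, he⟩ := h
  refine ⟨e.symm, fun u v => ?_⟩
  rw [← he (e.symm u) (e.symm v), e.apply_symm_apply, e.apply_symm_apply]

theorem iso_trans {G H K : FinDigraph} (hGH : Iso G H) (hHK : Iso H K) : Iso G K := by
  obtain ⟨e, he⟩ := hGH
  obtain ⟨f, hf⟩ := hHK
  exact ⟨e.trans f, fun u v => (hf (e u) (e v)).trans (he u v)⟩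

instance isoSetoid : Setoid FinDigraph :=
  ⟨Iso, iso_refl, fun h => iso_symm h, fun h h' => iso_trans h h'⟩

/-- `Emb G H` : `G` is isomorphic to an induced subdigraph of `H`. -/
def Emb (G H : FinDigraph) : Prop :=
  ∃ f : Fin G.n ↪ Fin H.n, ∀ u v, H.adj (f u) (f v) = G.adj u v

end FinDigraph

/-- `D`: the isomorphism classes of finite digraphs. -/
def D : Type := Quotient FinDigraph.isoSetoid

/-- The isomorphism class of a finite digraph. -/
def toD (G : FinDigraph) : D := Quotient.mk _ G

/-- The substructure (induced subdigraph) ordering `⊑` on `D`. -/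
instance : LE D :=
  ⟨fun x y => ∃ G H : FinDigraph, x = toD G ∧ y = toD H ∧ FinDigraph.Emb G H⟩

/-- An order automorphism: a bijection such that `x ≤ y ↔ f x ≤ f y`. -/
def IsOrderAuto {α : Type*} [LE α] (f : α → α) : Prop :=
  Function.Bijective f ∧ ∀ x y : α, x ≤ y ↔ f x ≤ f y

/-- φ₁ on digraphs: complement the loop status of every vertex. -/
def phi1Fn (G : FinDigraph) : FinDigraph :=
  ⟨G.n, G.pos, fun u v => if u = v then !(G.adj u v) else G.adj u v⟩

/-- Edge reversal: transpose the edge relation. -/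
def revFn (G : FinDigraph) : FinDigraph :=
  ⟨G.n, G.pos, fun u v => G.adj v u⟩

/-- φ₂ on digraphs: toggle both edges between distinct loopless vertices joined
by both or neither of the two possible edges. -/
def phi2Fn (G : FinDigraph) : FinDigraph :=
  ⟨G.n, G.pos, fun u v =>
    if u ≠ v ∧ G.adj u u = false ∧ G.adj v v = false ∧ G.adj u v = G.adj v u then
      !(G.adj u v)
    else G.adj u v⟩

/-- φ₃ on digraphs: toggle both edges between distinct looped vertices joined
by both or neither of the two possible edges. -/
def phi3Fn (G : FinDigraph) : FinDigraph :=
  ⟨G.n, G.pos, fun u v =>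
    if u ≠ v ∧ G.adj u u = true ∧ G.adj v v = true ∧ G.adj u v = G.adj v u then
      !(G.adj u v)
    else G.adj u v⟩

/-- φ₄ on digraphs: reverse the single edge between distinct loopless vertices
joined by exactly one of the two possible edges. -/
def phi4Fn (G : FinDigraph) : FinDigraph :=
  ⟨G.n, G.pos, fun u v =>
    if u ≠ v ∧ G.adj u u = false ∧ G.adj v v = false ∧ G.adj u v ≠ G.adj v u then
      G.adj v u
    else G.adj u v⟩

/-- φ₅ on digraphs: reverse the single edge between distinct looped vertices
joined by exactly one of the two possible edges. -/
def phi5Fn (G : FinDigraph) : FinDigraph :=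
  ⟨G.n, G.pos, fun u v =>
    if u ≠ v ∧ G.adj u u = true ∧ G.adj v v = true ∧ G.adj u v ≠ G.adj v u then
      G.adj v u
    else G.adj u v⟩

/-- φ_π on digraphs: for each ordered pair `(u,v)` of distinct vertices with a loop at
`u` and no loop at `v`, replace its type `(Adj(u,v), Adj(v,u)) : Bool × Bool` by `π`
applied to it; everything else is unchanged. -/
def phiPiFn (π : Equiv.Perm (Bool × Bool)) (G : FinDigraph) : FinDigraph :=
  ⟨G.n, G.pos, fun u v =>
    if u = v then G.adj u v
    else if G.adj u u = true ∧ G.adj v v = false then (π (G.adj u v, G.adj v u)).1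
    else if G.adj u u = false ∧ G.adj v v = true then (π (G.adj v u, G.adj u v)).2
    else G.adj u v⟩

/-- The number of vertices of an isomorphism class. -/
def nVerts : D → ℕ :=
  Quotient.lift (fun G : FinDigraph => G.n) (fun _ _ h => by
    obtain ⟨e, -⟩ := h
    simpa using Fintype.card_congr e)

/-- `Dn n`: the classes of digraphs with at most `n` vertices (first `n` levels). -/
def Dn (n : ℕ) : Set D := {x : D | nVerts x ≤ n}

theorem mem_Dn_succ {n : ℕ} {x : D} (h : x ∈ Dn n) : x ∈ Dn (n + 1) :=
  le_trans h (Nat.le_succ n)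

/-- The set of lower covers of `x` in `(D, ⊑)`. -/
def lcov (x : D) : Set D :=
  {y : D | y ≤ x ∧ y ≠ x ∧ ∀ z : D, y ≤ z → z ≤ x → z = y ∨ z = x}

/-- `scount x` = number of classes sharing the lower-cover set of `x`. -/
noncomputable def scount (x : D) : ℕ := Nat.card {y : D // lcov y = lcov x}

/-- `Hset m` = `{(l(G), s(G)) : G ∈ D with exactly m vertices}`. -/
def Hset (m : ℕ) : Set (Set D × ℕ) :=
  {p : Set D × ℕ | ∃ x : D, nVerts x = m ∧ p = (lcov x, scount x)}

/-- Element-wise action of a map of `Dn n` on a subset of `Dn n`. -/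
def setImage {n : ℕ} (φ : ↥(Dn n) → ↥(Dn n)) (S : Set D) : Set D :=
  {z : D | ∃ (y : D) (h : y ∈ Dn n), y ∈ S ∧ z = ↑(φ ⟨y, h⟩)}

/-- Element-wise action of a map of `Dn n` on a set of pairs `(S, k)`. -/
def HsetImage {n : ℕ} (φ : ↥(Dn n) → ↥(Dn n)) (A : Set (Set D × ℕ)) : Set (Set D × ℕ) :=
  {p : Set D × ℕ | ∃ q ∈ A, p = (setImage φ q.1, q.2)}

/-- The swap permutation `σ(a,b) = (b,a)` of `Bool × Bool`. -/
def sigmaSwap : Equiv.Perm (Bool × Bool) := Equiv.prodComm Bool Bool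

/-- Restrictions to `D₃` of order automorphisms of `(D, ⊑)`. -/
def Aut3D : Set (↥(Dn 3) → ↥(Dn 3)) :=
  {g | ∃ φ : D → D, IsOrderAuto φ ∧ ∀ x : ↥(Dn 3), (↑(g x) : D) = φ ↑x}

/-- Restrictions to `D₃` of order automorphisms of `D₄`. -/
def Aut3D4 : Set (↥(Dn 3) → ↥(Dn 3)) :=
  {g | ∃ ψ : ↥(Dn 4) → ↥(Dn 4), IsOrderAuto ψ ∧
    ∀ x : ↥(Dn 3), (↑(g x) : D) = ↑(ψ ⟨↑x, mem_Dn_succ x.2⟩)}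

/-- Restrictions to `D₃` of order automorphisms of `D₄`, as order isomorphisms of `D₃`. -/
def Aut3D4Iso : Set (↥(Dn 3) ≃o ↥(Dn 3)) :=
  {g | ∃ ψ : ↥(Dn 4) → ↥(Dn 4), IsOrderAuto ψ ∧
    ∀ x : ↥(Dn 3), ((g x : ↥(Dn 3)) : D) = ↑(ψ ⟨↑x, mem_Dn_succ x.2⟩)}

section Helpers

/-- induced embedding of Bool relations -/
def BEmb {V W : Type} (r : V → V → Bool) (s : W → W → Bool) : Prop :=
  ∃ f : V → W, Function.Injective f ∧ ∀ u v, s (f u) (f v) = r u v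

theorem BEmb.trans {U V W : Type} {q : U → U → Bool} {r : V → V → Bool} {s : W → W → Bool}
    (h1 : BEmb q r) (h2 : BEmb r s) : BEmb q s := by
  obtain ⟨f, hf, hf'⟩ := h1
  obtain ⟨g, hg, hg'⟩ := h2
  exact ⟨g ∘ f, hg.comp hf, fun u v => by simp [hg', hf']⟩

theorem BEmb.symm_of_card {V W : Type} [Fintype V] [Fintype W] {r : V → V → Bool}
    {s : W → W → Bool} (h : BEmb r s) (hc : Fintype.card V = Fintype.card W) : BEmb s r := by
  obtain ⟨f, hf, hf'⟩ := h
  have hb : Function.Bijective f := (Fintype.bijective_iff_injective_and_card f).2 ⟨hf, hc⟩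
  let e := Equiv.ofBijective f hb
  refine ⟨e.symm, e.symm.injective, fun u v => ?_⟩
  rw [← hf']
  change s (e (e.symm u)) (e (e.symm v)) = _
  simp

noncomputable def mkG (V : Type) [Fintype V] [Nonempty V] (r : V → V → Bool) : FinDigraph :=
  ⟨Fintype.card V, Fintype.card_pos,
    fun a b => r ((Fintype.equivFin V).symm a) ((Fintype.equivFin V).symm b)⟩

noncomputable def mkD (V : Type) [Fintype V] [Nonempty V] (r : V → V → Bool) : D :=
  toD (mkG V r)

theorem emb_of_iso {G H : FinDigraph} (h : FinDigraph.Iso G H) : BEmb G.adj H.adj := by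
  obtain ⟨e, he⟩ := h
  exact ⟨e, e.injective, he⟩

theorem toD_eq {G H : FinDigraph} : toD G = toD H ↔ FinDigraph.Iso G H :=
  ⟨fun h => Quotient.exact h, fun h => Quotient.sound h⟩

theorem toD_le {G H : FinDigraph} : toD G ≤ toD H ↔ BEmb G.adj H.adj := by
  constructor
  · rintro ⟨G', H', h1, h2, ⟨f, hf⟩⟩
    have a := emb_of_iso (toD_eq.1 h1)
    have b := emb_of_iso (toD_eq.1 h2.symm)
    exact a.trans (BEmb.trans ⟨f, f.injective, hf⟩ b)
  · rintro ⟨f, hf, hf'⟩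
    exact ⟨G, H, rfl, rfl, ⟨f, hf⟩, hf'⟩

theorem mkG_emb1 (V : Type) [Fintype V] [Nonempty V] (r : V → V → Bool) :
    BEmb (mkG V r).adj r :=
  ⟨(Fintype.equivFin V).symm, (Fintype.equivFin V).symm.injective, fun _ _ => rfl⟩

theorem mkG_emb2 (V : Type) [Fintype V] [Nonempty V] (r : V → V → Bool) :
    BEmb r (mkG V r).adj :=
  ⟨(Fintype.equivFin V), (Fintype.equivFin V).injective, fun _ _ => by simp [mkG]⟩

theorem mkD_le {V W : Type} [Fintype V] [Nonempty V] [Fintype W] [Nonempty W]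
    {r : V → V → Bool} {s : W → W → Bool} : mkD V r ≤ mkD W s ↔ BEmb r s := by
  unfold mkD
  rw [toD_le]
  exact ⟨fun h => (mkG_emb2 V r).trans (h.trans (mkG_emb1 W s)),
    fun h => (mkG_emb1 V r).trans (h.trans (mkG_emb2 W s))⟩

theorem nVerts_mkD (V : Type) [Fintype V] [Nonempty V] (r : V → V → Bool) :
    nVerts (mkD V r) = Fintype.card V := rfl

theorem eq_of_le_card {x y : D} (h : x ≤ y) (hc : nVerts x = nVerts y) : x = y := by
  induction x using Quotient.inductionOn with | _ G
  induction y using Quotient.inductionOn with | _ H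
  have h' := (toD_le (G := G) (H := H)).1 h
  obtain ⟨f, hf, hf'⟩ := h'
  have hc' : Fintype.card (Fin G.n) = Fintype.card (Fin H.n) := by simpa using (show G.n = H.n from hc)
  have hb : Function.Bijective f := (Fintype.bijective_iff_injective_and_card f).2 ⟨hf, hc'⟩
  exact Quotient.sound ⟨Equiv.ofBijective f hb, hf'⟩

theorem le_card {x y : D} (h : x ≤ y) : nVerts x ≤ nVerts y := by
  induction x using Quotient.inductionOn with | _ G
  induction y using Quotient.inductionOn with | _ H
  obtain ⟨f, hf, hf'⟩ := (toD_le (G := G) (H := H)).1 h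
  have := Fintype.card_le_of_injective f hf
  rw [Fintype.card_fin, Fintype.card_fin] at this
  exact this

theorem mkD_eq {V W : Type} [Fintype V] [Nonempty V] [Fintype W] [Nonempty W]
    {r : V → V → Bool} {s : W → W → Bool} (h : BEmb r s)
    (hc : Fintype.card V = Fintype.card W) : mkD V r = mkD W s :=
  eq_of_le_card (mkD_le.2 h) hc

theorem exists_mkD (V : Type) [Fintype V] [Nonempty V] (x : D)
    (h : nVerts x = Fintype.card V) : ∃ s : V → V → Bool, x = mkD V s := by
  induction x using Quotient.inductionOn with | _ G
  have hc : G.n = Fintype.card V := h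
  let e : V ≃ Fin G.n := (Fintype.equivFin V).trans (finCongr hc.symm)
  refine ⟨fun a b => G.adj (e a) (e b), ?_⟩
  symm
  refine eq_of_le_card ?_ ((nVerts_mkD V _).trans h.symm)
  have : BEmb (fun a b => G.adj (e a) (e b)) G.adj := ⟨e, e.injective, fun _ _ => rfl⟩
  exact toD_le.2 ((mkG_emb1 V _).trans this)

theorem nVerts_pos (x : D) : 0 < nVerts x := by
  induction x using Quotient.inductionOn with | _ G
  exact G.pos

theorem level_le (φ : D ≃o D) : ∀ n, ∀ x, nVerts x = n → n ≤ nVerts (φ x) := by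
  intro n
  induction n with
  | zero => intros; omega
  | succ n ih =>
    intro x hx
    rcases Nat.eq_zero_or_pos n with h0 | h0
    · subst h0
      exact nVerts_pos _
    · have : Nonempty (Fin n) := ⟨⟨0, h0⟩⟩
      obtain ⟨s, rfl⟩ := exists_mkD (Fin (n+1)) x (by simpa using hx)
      let y := mkD (Fin n) (fun a b => s a.castSucc b.castSucc)
      have hy : y ≤ mkD (Fin (n+1)) s :=
        mkD_le.2 ⟨Fin.castSucc, Fin.castSucc_injective n, fun _ _ => rfl⟩
      have hyn : nVerts y = n := by simp [y, nVerts_mkD]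
      have h1 := ih y hyn
      have h2 : φ y ≤ φ (mkD (Fin (n+1)) s) := φ.map_rel_iff.2 hy
      have h3 := le_card h2
      by_contra hcon
      have h4 : nVerts (φ y) = nVerts (φ (mkD (Fin (n+1)) s)) := by omega
      have h5 := φ.injective (eq_of_le_card h2 h4)
      rw [h5] at hyn
      omega

theorem level_eq (φ : D ≃o D) (x : D) : nVerts (φ x) = nVerts x := by
  have h1 := level_le φ _ x rfl
  have h2 := level_le φ.symm _ (φ x) rfl
  simp at h2
  omega

theorem img (φ : D ≃o D) {V : Type} [Fintype V] [Nonempty V] (r : V → V → Bool) :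
    ∃ s : V → V → Bool, φ (mkD V r) = mkD V s :=
  exists_mkD V _ (by rw [level_eq, nVerts_mkD])

def Fixd (φ : D ≃o D) (V : Type) [Fintype V] [Nonempty V] (r : V → V → Bool) : Prop :=
  φ (mkD V r) = mkD V r

theorem transfer {φ : D ≃o D} {U V : Type} [Fintype V] [Nonempty V] [Fintype U] [Nonempty U]
    {q : U → U → Bool} {r s : V → V → Bool} (h : φ (mkD V r) = mkD V s) (hq : Fixd φ U q) :
    BEmb q r ↔ BEmb q s := by
  rw [← mkD_le, ← mkD_le, ← h, ← φ.map_rel_iff]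
  unfold Fixd at hq
  rw [hq]

def FixSmall (φ : D ≃o D) : Prop := ∀ x, nVerts x ≤ 12 → φ x = x

theorem FixSmall.fixd {φ : D ≃o D} (hφ : FixSmall φ) {U : Type} [Fintype U] [Nonempty U]
    (q : U → U → Bool) (h : Fintype.card U ≤ 12) : Fixd φ U q :=
  hφ _ (by rwa [nVerts_mkD])

theorem small_fwd {φ : D ≃o D} (hφ : FixSmall φ) {V : Type} [Fintype V] [Nonempty V]
    {r s : V → V → Bool} (h : φ (mkD V r) = mkD V s) {U : Type} [Fintype U] [Nonempty U]
    (hU : Fintype.card U ≤ 12) (f : U → V) (hf : Function.Injective f) :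
    ∃ g : U → V, Function.Injective g ∧ ∀ a b, s (g a) (g b) = r (f a) (f b) :=
  (transfer h (hφ.fixd (fun a b => r (f a) (f b)) hU)).1 ⟨f, hf, fun _ _ => rfl⟩

theorem small_back {φ : D ≃o D} (hφ : FixSmall φ) {V : Type} [Fintype V] [Nonempty V]
    {r s : V → V → Bool} (h : φ (mkD V r) = mkD V s) {U : Type} [Fintype U] [Nonempty U]
    (hU : Fintype.card U ≤ 12) (f : U → V) (hf : Function.Injective f) :
    ∃ g : U → V, Function.Injective g ∧ ∀ a b, r (g a) (g b) = s (f a) (f b) :=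
  (transfer h (hφ.fixd (fun a b => s (f a) (f b)) hU)).2 ⟨f, hf, fun _ _ => rfl⟩

/-- reflexive-or-not transitive tournament -/
def TT (l : Bool) (N : ℕ) : Fin N → Fin N → Bool := fun i j => if i = j then l else decide (i < j)

def TR {V : Type} (l : Bool) (s : V → V → Bool) (x y : V) : Prop :=
  s x x = l ∧ s y y = l ∧ s x y ≠ s y x

theorem TR.symm {V : Type} {l : Bool} {s : V → V → Bool} {x y : V} (h : TR l s x y) :
    TR l s y x := ⟨h.2.1, h.1, h.2.2.symm⟩

theorem TR.irrefl {V : Type} {l : Bool} {s : V → V → Bool} {x : V} (h : TR l s x x) :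
    False := h.2.2 rfl

theorem TT_TR {l : Bool} {N : ℕ} {i j : Fin N} (h : i ≠ j) : TR l (TT l N) i j := by
  refine ⟨by simp [TT], by simp [TT], ?_⟩
  simp only [TT, h, h.symm, if_false]
  rcases lt_or_gt_of_ne h with h | h <;> simp [h, not_lt.2 h.le]

theorem TT_fin {X : Type} [Fintype X] (l : Bool) (s : X → X → Bool) (N : ℕ)
    (hN : Fintype.card X = N) (h1 : ∀ x y, x ≠ y → TR l s x y) (h0 : ∀ x, s x x = l)
    (h2 : ∀ x y z, x ≠ y → y ≠ z → x ≠ z → s x y = true → s y z = true → s x z = true) :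
    BEmb (TT l N) s := by
  classical
  let lt : X → X → Prop := fun x y => x ≠ y ∧ s x y = true
  have : IsStrictTotalOrder X lt :=
    { irrefl := fun x h => h.1 rfl
      trans := by
        rintro x y z ⟨hxy, h⟩ ⟨hyz, h'⟩
        have hxz : x ≠ z := by
          rintro rfl
          exact (h1 x y hxy).2.2 (h.trans h'.symm)
        exact ⟨hxz, h2 x y z hxy hyz hxz h h'⟩
      trichotomous := by
        intro x y a b
        by_contra hne
        have := (h1 x y hne).2.2
        simp only [lt, not_and] at a b
        have a := a hne
        have b := b (Ne.symm hne)
        simp_all }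
  let : LinearOrder X := linearOrderOfSTO lt
  let e : Fin N ≃o X := Fintype.orderIsoFinOfCardEq X hN
  refine ⟨e, e.injective, fun u v => ?_⟩
  unfold TT
  split_ifs with h
  · subst h; exact h0 _
  · have hne : e u ≠ e v := fun h' => h (e.injective h')
    have : u < v ↔ lt (e u) (e v) := (e.lt_iff_lt (x := u) (y := v)).symm
    rw [Bool.eq_iff_iff, decide_eq_true_iff, this]
    simp [lt, hne]

theorem TT_fixd {φ : D ≃o D} (hφ : FixSmall φ) (l : Bool) (N : ℕ) [Nonempty (Fin N)] :
    Fixd φ (Fin N) (TT l N) := by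
  obtain ⟨s, hs⟩ := img φ (TT l N)
  have key : BEmb (TT l N) s := by
    have h0 : ∀ x, s x x = l := by
      intro x
      obtain ⟨g, hg, hg'⟩ := small_back hφ hs (U := Unit) (by simp) (fun _ => x)
        (fun _ _ _ => rfl)
      rw [← hg' () ()]
      simp [TT]
    apply TT_fin l s N (by simp) _ h0
    · intro x y z hxy hyz hxz h h'
      obtain ⟨g, hg, hg'⟩ := small_back hφ hs (U := Fin 3) (by simp) ![x, y, z] (by
        intro a b
        fin_cases a <;> fin_cases b <;> simp_all [Ne.symm hxy, Ne.symm hyz, Ne.symm hxz])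
      have e1 := hg' 0 1
      have e2 := hg' 1 2
      have e3 := hg' 0 2
      have n1 : g 0 ≠ g 1 := fun h => by simpa using hg h
      have n2 : g 1 ≠ g 2 := fun h => by simpa using hg h
      have n3 : g 0 ≠ g 2 := fun h => by simpa using hg h
      simp [TT, n1, n2, n3, h, h'] at e1 e2 e3
      rw [← e3]
      simpa using e1.trans e2
    · intro x y hxy
      obtain ⟨g, hg, hg'⟩ := small_back hφ hs (U := Fin 2) (by simp) ![x, y] (by
        intro a b
        fin_cases a <;> fin_cases b <;> simp_all [Ne.symm hxy])
      have n1 : g 0 ≠ g 1 := fun h => by simpa using hg h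
      have := TT_TR (l := l) n1
      refine ⟨h0 _, h0 _, ?_⟩
      have e1 := hg' 0 1
      have e2 := hg' 1 0
      simp at e1 e2
      rw [← e1, ← e2]
      exact this.2.2
  exact hs.trans (mkD_eq key rfl).symm

theorem uniq {X : Type} [Fintype X] {l : Bool} {s : X → X → Bool} {N k : ℕ} {L : Fin N → X}
    (hL : Function.Injective L) (hL' : ∀ i j, s (L i) (L j) = TT l N i j)
    (hx : ∀ x i, TR l s x (L i) → ∃ j, x = L j)
    {t : Fin k → X} (ht : Function.Injective t) (ht' : ∀ i j, s (t i) (t j) = TT l k i j)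
    (hc : Fintype.card X < N + k) :
    ∃ f : Fin k → Fin N, StrictMono f ∧ ∀ i, t i = L (f i) := by
  have h1 : ∃ a b, t a = L b := by
    by_contra hcon
    push Not at hcon
    have : Function.Injective (Sum.elim t L) := by
      rintro (a | a) (b | b) h
      · simpa using ht h
      · exact absurd h (hcon a b)
      · exact absurd h.symm (hcon b a)
      · simpa using hL h
    have := Fintype.card_le_of_injective _ this
    simp at this
    omega
  obtain ⟨a, b, hab⟩ := h1
  have h2 : ∀ i, ∃ j, t i = L j := by
    intro i
    by_cases hi : i = a
    · exact ⟨b, hi ▸ hab⟩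
    · have := TT_TR (l := l) hi
      apply hx (t i) b
      rw [← hab]
      unfold TR at this ⊢
      simpa only [ht'] using this
  choose f hf using h2
  refine ⟨f, ?_, hf⟩
  intro i j hij
  have h3 := ht' i j
  have hne : f i ≠ f j := by
    intro h
    apply hij.ne
    apply ht
    rw [hf, hf, h]
  rw [hf, hf, hL'] at h3
  simpa [TT, hne, hij.ne, hij] using h3

theorem sm_id {N : ℕ} {f : Fin N → Fin N} (hf : StrictMono f) (i : Fin N) : f i = i :=
  le_antisymm hf.apply_le hf.le_apply

theorem sm_le {k N : ℕ} {f : Fin k → Fin N} (hf : StrictMono f) :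
    ∀ i : ℕ, ∀ h : i < k, i ≤ (f ⟨i, h⟩).val := by
  intro i
  induction i with
  | zero => intros; omega
  | succ i ih =>
    intro h
    have h1 := ih (by omega)
    have h2 : f ⟨i, by omega⟩ < f ⟨i+1, h⟩ := hf (by simp)
    have h3 : (f ⟨i, by omega⟩).val < (f ⟨i+1, h⟩).val := h2
    omega

/-- the framed structure -/
def Hr (l c1 c2 e : Bool) (N : ℕ) (W : Type) (g : W → W → Bool) (p : W → Fin N) :
    Fin N ⊕ W → Fin N ⊕ W → Bool
  | .inl i, .inl j => TT l N i j
  | .inl i, .inr w => Bool.xor (decide (p w = i)) (if g w w = l then e else c1)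
  | .inr w, .inl i => Bool.xor (decide (p w = i)) (if g w w = l then e else c2)
  | .inr u, .inr v => g u v

theorem Hr_notTR {l c1 c2 e : Bool} {N : ℕ} {W : Type} {g : W → W → Bool} {p : W → Fin N}
    {w : W} {i : Fin N} : ¬ TR l (Hr l c1 c2 e N W g p) (.inr w) (.inl i) := by
  rintro ⟨h1, h2, h3⟩
  simp only [Hr] at h1 h3
  simp [h1] at h3

theorem Hr_uniq {l c1 c2 e : Bool} {N : ℕ} {W : Type} [Fintype W] {g : W → W → Bool}
    {p : W → Fin N} {k : ℕ} {t : Fin k → Fin N ⊕ W} (ht : Function.Injective t)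
    (ht' : ∀ i j, Hr l c1 c2 e N W g p (t i) (t j) = TT l k i j) (hc : Fintype.card W < k) :
    ∃ f : Fin k → Fin N, StrictMono f ∧ ∀ i, t i = .inl (f i) := by
  apply uniq (L := Sum.inl) Sum.inl_injective (fun _ _ => rfl) _ ht ht' (by simpa using hc)
  rintro (j | w) i h
  · exact ⟨j, rfl⟩
  · exact absurd h Hr_notTR

theorem Hr_sub {l c1 c2 e : Bool} {N k : ℕ} {W U : Type} {g : W → W → Bool} {q : U → Fin k}
    {p : W → Fin N} {f : Fin k → Fin N} (hf : StrictMono f) {h : U → W}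
    (hh : Function.Injective h) (hp : ∀ u, p (h u) = f (q u)) {g' : U → U → Bool}
    (hg : ∀ u v, g (h u) (h v) = g' u v) :
    BEmb (Hr l c1 c2 e k U g' q) (Hr l c1 c2 e N W g p) := by
  refine ⟨Sum.map f h, Sum.map_injective.2 ⟨hf.injective, hh⟩, ?_⟩
  rintro (i | u) (j | v) <;> simp [Hr, TT, hp, hg, hf.injective.eq_iff, hf.lt_iff_lt]

theorem Hr_struct {l c1 c2 e : Bool} {N k : ℕ} {W U : Type} [Fintype W] {g : W → W → Bool}
    {q : U → Fin k} {p : W → Fin N} {g' : U → U → Bool} (hc : Fintype.card W < k)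
    (hB : BEmb (Hr l c1 c2 e k U g' q) (Hr l c1 c2 e N W g p)) :
    ∃ f : Fin k → Fin N, StrictMono f ∧ ∃ h : U → W, Function.Injective h ∧
      (∀ u, p (h u) = f (q u)) ∧ ∀ u v, g (h u) (h v) = g' u v := by
  obtain ⟨F, hF, hF'⟩ := hB
  obtain ⟨f, hf, hf'⟩ := Hr_uniq (t := fun i => F (.inl i)) (hF.comp Sum.inl_injective)
    (fun i j => hF' _ _) hc
  have h1 : ∀ u, ∃ w, F (.inr u) = .inr w := by
    intro u
    rcases hu : F (.inr u) with c | w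
    · exfalso
      have hne : c ≠ f ⟨0, by omega⟩ := by
        intro h
        have := hf' ⟨0, by omega⟩
        rw [← h, ← hu] at this
        simpa using hF this
      have h2 := TT_TR (l := l) hne
      apply Hr_notTR (l := l) (c1 := c1) (c2 := c2) (e := e) (g := g') (p := q) (w := u)
        (i := ⟨0, by omega⟩)
      unfold TR
      rw [← hF', ← hF', ← hF', ← hF', hu, hf']
      exact h2
    · exact ⟨w, rfl⟩
  choose h hh using h1
  have hg : ∀ u v, g (h u) (h v) = g' u v := by
    intro u v
    have := hF' (.inr u) (.inr v)
    rw [hh, hh] at this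
    exact this
  refine ⟨f, hf, h, ?_, ?_, hg⟩
  · intro u v huv
    have : F (.inr u) = F (.inr v) := by rw [hh, hh, huv]
    simpa using hF this
  · intro u
    have := hF' (.inr u) (.inl (q u))
    rw [hh, hf'] at this
    simp only [Hr, hg] at this
    by_contra hne
    simp [hne] at this

/-- one extra vertex -/
abbrev V1 (l c1 c2 e : Bool) (N : ℕ) (i : Fin N) (m : Bool) : Fin N ⊕ Unit → Fin N ⊕ Unit → Bool :=
  Hr l c1 c2 e N Unit (fun _ _ => m) (fun _ => i)

theorem inj_pair {X : Type} {x y : X} (h : x ≠ y) : Function.Injective ![x, y] := by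
  intro a b
  fin_cases a <;> fin_cases b <;> simp_all [Ne.symm h]

theorem inj_triple {X : Type} {x y z : X} (h : x ≠ y) (h' : x ≠ z) (h'' : y ≠ z) :
    Function.Injective ![x, y, z] := by
  intro a b
  fin_cases a <;> fin_cases b <;> simp_all [Ne.symm h, Ne.symm h', Ne.symm h'']

theorem V1_pos {l c1 c2 e : Bool} {N : ℕ} {i j : Fin N} {m : Bool} (hN : 3 ≤ N)
    (H : ∀ k, 2 ≤ k → k < N → ∀ a : Fin k, BEmb (V1 l c1 c2 e k a m) (V1 l c1 c2 e N i m) ↔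
      BEmb (V1 l c1 c2 e k a m) (V1 l c1 c2 e N j m)) : ¬ i < j := by
  intro hij
  have hij' : i.val < j.val := hij
  by_cases hi : i.val + 2 < N
  · have h1 : BEmb (V1 l c1 c2 e (i.val+2) ⟨i.val+1, by omega⟩ m) (V1 l c1 c2 e N j m) := by
      refine Hr_sub (f := fun t => ⟨t.val + (j.val - i.val - 1), by omega⟩) ?_
        (h := id) Function.injective_id ?_ (fun _ _ => rfl)
      · intro a b hab
        have : a.val < b.val := hab
        simp only [Fin.mk_lt_mk]; omega
      · intro u
        apply Fin.ext
        simp only; omega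
    obtain ⟨f, hf, h, -, hp, -⟩ := Hr_struct (by simp) ((H _ (by omega) hi _).2 h1)
    have := sm_le hf (i.val+1) (by omega)
    have h2 := congrArg Fin.val (hp ())
    omega
  · have h1 : BEmb (V1 l c1 c2 e 2 0 m) (V1 l c1 c2 e N i m) := by
      refine Hr_sub (f := ![i, j]) ?_
        (h := id) Function.injective_id ?_ (fun _ _ => rfl)
      · intro a b hab
        fin_cases a <;> fin_cases b <;> simp_all
      · intro u
        simp
    obtain ⟨f, hf, h, -, hp, -⟩ := Hr_struct (by simp) ((H 2 (by omega) (by omega) _).1 h1)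
    have h2 : f 0 < f 1 := hf (by simp)
    have h3 := hp ()
    have h4 : (f 0).val < (f 1).val := h2
    rw [← h3] at h4
    omega

theorem exists_other {N : ℕ} {L : Fin N → Fin N ⊕ Unit} (hL : Function.Injective L) :
    ∃ x, (∀ i, L i ≠ x) ∧ ∀ y, y = x ∨ ∃ i, y = L i := by
  classical
  have h1 : ¬ Function.Surjective L := by
    intro h
    have := Fintype.card_of_bijective ⟨hL, h⟩
    simp at this
  unfold Function.Surjective at h1
  push Not at h1
  obtain ⟨x, hx⟩ := h1
  refine ⟨x, hx, ?_⟩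
  have hinj : Function.Injective (Sum.elim L (fun _ : Unit => x)) := by
    rintro (a | a) (b | b) h
    · simpa using hL h
    · exact absurd h (hx a)
    · exact absurd h.symm (hx b)
    · rfl
  have hs := Finite.surjective_of_injective hinj
  intro y
  obtain ⟨(i | u), h⟩ := hs y
  · exact Or.inr ⟨i, h.symm⟩
  · exact Or.inl h.symm

theorem V1_fixd {φ : D ≃o D} (hφ : FixSmall φ) (l c1 c2 e : Bool) (m : Bool) (N : ℕ) :
    ∀ i : Fin N, Fixd φ (Fin N ⊕ Unit) (V1 l c1 c2 e N i m) := by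
  induction N using Nat.strong_induction_on with | _ N ih
  intro i
  by_cases hN : N + 1 ≤ 12
  · exact hφ.fixd _ (by simpa using hN)
  have : Nonempty (Fin N) := ⟨i⟩
  obtain ⟨s, hs⟩ := img φ (V1 l c1 c2 e N i m)
  have hT : BEmb (TT l N) s := (transfer hs (TT_fixd hφ l N)).1
    ⟨Sum.inl, Sum.inl_injective, fun _ _ => rfl⟩
  obtain ⟨L, hL, hL'⟩ := hT
  obtain ⟨x, hx, hall⟩ := exists_other hL
  have LTR : ∀ j k, j ≠ k → TR l s (L j) (L k) := by
    intro j k hjk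
    have := TT_TR (l := l) hjk
    unfold TR at this ⊢
    simpa only [hL'] using this
  have LL : ∀ j, s (L j) (L j) = l := by intro j; rw [hL']; simp [TT]
  let m1 : Bool := if m = l then e else c1
  let m2 : Bool := if m = l then e else c2
  have hmm : m = l → m1 = m2 := by intro h; simp [m1, m2, h]
  have trip : ∀ j k, j ≠ k → (TR l s x (L j) ∧ TR l s x (L k)) ∨
      (s x x = m ∧ ∃ α β : Bool, ¬ (α = true ∧ β = true) ∧
        s (L j) x = Bool.xor α m1 ∧ s x (L j) = Bool.xor α m2 ∧
        s (L k) x = Bool.xor β m1 ∧ s x (L k) = Bool.xor β m2) := by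
    intro j k hjk
    obtain ⟨g, hg, hg'⟩ := small_back hφ hs (U := Fin 3) (by simp) ![x, L j, L k]
      (inj_triple (hx j).symm (hx k).symm (fun h => hjk (hL h)))
    have t12 : TR l (V1 l c1 c2 e N i m) (g 1) (g 2) := by
      have := LTR j k hjk
      unfold TR
      rw [hg', hg', hg', hg']
      exact this
    have e00 := hg' 0 0
    have e01 := hg' 0 1
    have e10 := hg' 1 0
    have e02 := hg' 0 2
    have e20 := hg' 2 0
    have e11 := hg' 1 1
    have e22 := hg' 2 2
    have n01 : g 0 ≠ g 1 := fun h => by simpa using hg h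
    have n02 : g 0 ≠ g 2 := fun h => by simpa using hg h
    have n12 : g 1 ≠ g 2 := fun h => by simpa using hg h
    simp only [Matrix.cons_val] at e00 e01 e10 e02 e20 e11 e22
    rcases h1 : g 1 with a | u
    · rcases h2 : g 2 with b | u
      · have hab : a ≠ b := by
          rintro rfl
          exact n12 (h1.trans h2.symm)
        rcases h0 : g 0 with c | u
        · left
          have hca : c ≠ a := by
            rintro rfl
            exact n01 (h0.trans h1.symm)
          have hcb : c ≠ b := by
            rintro rfl
            exact n02 (h0.trans h2.symm)
          rw [h0, h1] at e01 e10
          rw [h0, h2] at e02 e20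
          rw [h0] at e00
          rw [h1] at e11
          rw [h2] at e22
          have A := TT_TR (l := l) hca
          have B := TT_TR (l := l) hcb
          unfold TR at A B ⊢
          rw [← e00, ← e01, ← e10, ← e02, ← e20, ← e11, ← e22]
          exact ⟨A, B⟩
        · right
          rw [h0, h1] at e01 e10
          rw [h0, h2] at e02 e20
          rw [h0] at e00
          refine ⟨e00.symm, decide (i = a), decide (i = b), ?_, e10.symm, e01.symm,
            e20.symm, e02.symm⟩
          simp only [decide_eq_true_eq]
          rintro ⟨rfl, rfl⟩
          exact hab rfl
      · rw [h1, h2] at t12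
        exact absurd t12.symm Hr_notTR
    · rcases h2 : g 2 with b | u'
      · rw [h1, h2] at t12
        exact absurd t12 Hr_notTR
      · exact absurd (h1.trans h2.symm) n12
  have exnot : ∃ j, ¬ TR l s x (L j) := by
    by_contra hcon
    push Not at hcon
    have hTR : ∀ y z, y ≠ z → TR l s y z := by
      intro y z hyz
      rcases hall y with rfl | ⟨a, rfl⟩ <;> rcases hall z with rfl | ⟨b, rfl⟩
      · exact absurd rfl hyz
      · exact hcon b
      · exact (hcon a).symm
      · exact LTR a b (fun h => hyz (by rw [h]))
    obtain ⟨g, hg, hg'⟩ := small_fwd hφ hs (U := Fin 2) (by simp) ![.inr (), .inl i]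
      (inj_pair (by simp))
    have n01 : g 0 ≠ g 1 := fun h => by simpa using hg h
    have := hTR _ _ n01
    unfold TR at this
    rw [hg', hg', hg', hg'] at this
    exact Hr_notTR this
  obtain ⟨j0, hj0⟩ := exnot
  have notTR : ∀ j, ¬ TR l s x (L j) := by
    intro j
    by_cases hj : j = j0
    · rwa [hj]
    · rcases trip j j0 hj with h | ⟨h1, α, β, -, h2, h3, -⟩
      · exact absurd h.2 hj0
      · rintro ⟨h4, h5, h6⟩
        have := hmm (h1.symm.trans h4)
        rw [h2, h3, this] at h6
        exact h6 rfl
  have good : ∀ j k, j ≠ k → (s x x = m ∧ ∃ α β : Bool, ¬ (α = true ∧ β = true) ∧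
        s (L j) x = Bool.xor α m1 ∧ s x (L j) = Bool.xor α m2 ∧
        s (L k) x = Bool.xor β m1 ∧ s x (L k) = Bool.xor β m2) := by
    intro j k hjk
    rcases trip j k hjk with h | h
    · exact absurd h.1 (notTR j)
    · exact h
  have hex : ∃ j, s x (L j) = Bool.xor true m2 := by
    obtain ⟨g, hg, hg'⟩ := small_fwd hφ hs (U := Fin 2) (by simp) ![.inr (), .inl i]
      (inj_pair (by simp))
    have n01 : g 0 ≠ g 1 := fun h => by simpa using hg h
    have e00 : s (g 0) (g 0) = m := hg' 0 0
    have e11 : s (g 1) (g 1) = l := (hg' 1 1).trans (by simp [Hr, TT])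
    have e01 : s (g 0) (g 1) = Bool.xor true m2 := (hg' 0 1).trans (by simp [Hr, m2])
    have e10 : s (g 1) (g 0) = Bool.xor true m1 := (hg' 1 0).trans (by simp [Hr, m1])
    rcases hall (g 0) with h0 | ⟨a, h0⟩ <;> rcases hall (g 1) with h1 | ⟨b, h1⟩
    · exact absurd (h0.trans h1.symm) n01
    · exact ⟨b, by rw [← h0, ← h1]; exact e01⟩
    · refine ⟨a, ?_⟩
      have : m = l := by rw [← e00, h0, LL]
      rw [← h0, ← h1, e10, hmm this]
    · exfalso
      have : m = l := by rw [← e00, h0, LL]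
      have hab : a ≠ b := by
        rintro rfl
        exact n01 (h0.trans h1.symm)
      apply (LTR a b hab).2.2
      rw [← h0, ← h1, e01, e10, hmm this]
  obtain ⟨j, hj⟩ := hex
  have hk : ∃ k, k ≠ j := by
    by_cases h : j.val = 0
    · exact ⟨⟨1, by omega⟩, fun h' => by rw [← h'] at h; simp at h⟩
    · exact ⟨⟨0, by omega⟩, fun h' => h (by rw [← h'])⟩
  obtain ⟨k0, hk0⟩ := hk
  have hxx : s x x = m := (good k0 j hk0).1
  have key : ∀ k, s (L k) x = Bool.xor (decide (j = k)) m1 ∧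
      s x (L k) = Bool.xor (decide (j = k)) m2 := by
    intro k
    by_cases hkj : j = k
    · subst hkj
      obtain ⟨-, α, β, hn, h1, h2, h3, h4⟩ := good k0 j hk0
      rw [hj] at h4
      have hβ : β = true := by
        revert h4; cases β <;> cases m2 <;> simp
      rw [hj, h3, hβ]
      simp
    · obtain ⟨-, α, β, hn, h1, h2, h3, h4⟩ := good j k hkj
      rw [hj] at h2
      have hα : α = true := by
        revert h2; cases α <;> cases m2 <;> simp
      have hβ : β = false := by
        cases β
        · rfl
        · exact absurd ⟨hα, rfl⟩ hn
      rw [h3, h4, hβ]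
      simp [hkj]
  have hemb : BEmb (V1 l c1 c2 e N j m) s := by
    refine ⟨Sum.elim L (fun _ => x), ?_, ?_⟩
    · rintro (a | a) (b | b) h
      · simpa using hL h
      · exact absurd h (hx a)
      · exact absurd h.symm (hx b)
      · rfl
    · rintro (a | a) (b | b)
      · exact hL' a b
      · exact (key a).1
      · exact (key b).2
      · exact hxx
  have hsj : φ (mkD _ (V1 l c1 c2 e N i m)) = mkD _ (V1 l c1 c2 e N j m) :=
    hs.trans (mkD_eq hemb rfl).symm
  have hiff : ∀ k, 2 ≤ k → k < N → ∀ a : Fin k,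
      (BEmb (V1 l c1 c2 e k a m) (V1 l c1 c2 e N i m) ↔
      BEmb (V1 l c1 c2 e k a m) (V1 l c1 c2 e N j m)) := by
    intro k hk2 hkN a
    exact transfer hsj (ih k hkN a)
  have h1 := V1_pos (by omega) hiff
  have h2 := V1_pos (by omega) (fun k hk hk' a => (hiff k hk hk' a).symm)
  have hij : i = j := le_antisymm (not_lt.1 h2) (not_lt.1 h1)
  rw [← hij] at hsj
  exact hsj

theorem bemb_of_eq {V W : Type} [Fintype V] [Nonempty V] [Fintype W] [Nonempty W]
    {r : V → V → Bool} {s : W → W → Bool} (h : mkD V r = mkD W s) : BEmb r s := by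
  rw [← mkD_le, h, mkD_le]
  exact ⟨id, Function.injective_id, fun _ _ => rfl⟩

def WordOf (l c1 c2 e : Bool) {N : ℕ} {X : Type} (s : X → X → Bool) (L : Fin N → X) (x : X)
    (i : Fin N) (m : Bool) : Prop :=
  s x x = m ∧ ∀ j, s (L j) x = Bool.xor (decide (i = j)) (if m = l then e else c1) ∧
    s x (L j) = Bool.xor (decide (i = j)) (if m = l then e else c2)

theorem frame_word {φ : D ≃o D} (hφ : FixSmall φ) {l c1 c2 e : Bool} {N : ℕ} {W : Type}
    [Fintype W] [Nonempty (Fin N)] {g : W → W → Bool} {p : W → Fin N}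
    (hN2 : 2 ≤ N) (hc : Fintype.card W < N)
    {s : Fin N ⊕ W → Fin N ⊕ W → Bool}
    (hs : φ (mkD _ (Hr l c1 c2 e N W g p)) = mkD _ s) {L : Fin N → Fin N ⊕ W}
    (hL : Function.Injective L) (hL' : ∀ i j, s (L i) (L j) = TT l N i j)
    (x : Fin N ⊕ W) (hx : ∀ i, L i ≠ x) : ∃ w, WordOf l c1 c2 e s L x (p w) (g w w) := by
  let K : Fin N ⊕ Unit → Fin N ⊕ W := Sum.elim L (fun _ => x)
  have hK : Function.Injective K := by
    rintro (a | a) (b | b) h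
    · simpa using hL h
    · exact absurd h (hx a)
    · exact absurd h.symm (hx b)
    · rfl
  let Y : Fin N ⊕ Unit → Fin N ⊕ Unit → Bool := fun a b => s (K a) (K b)
  obtain ⟨Y', hY'⟩ := img φ.symm Y
  have hY : φ (mkD _ Y') = mkD _ Y := by rw [← hY']; simp
  have hYH : BEmb Y' (Hr l c1 c2 e N W g p) := by
    rw [← mkD_le, ← φ.map_rel_iff, hY, hs]
    exact mkD_le.2 ⟨K, hK, fun _ _ => rfl⟩
  have hTY : BEmb (TT l N) Y :=
    ⟨Sum.inl, Sum.inl_injective, fun i j => hL' i j⟩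
  obtain ⟨t, ht, ht'⟩ := (transfer hY (TT_fixd hφ l N)).2 hTY
  obtain ⟨F, hF, hF'⟩ := hYH
  obtain ⟨f, hf, hff⟩ := Hr_uniq (t := fun i => F (t i)) (hF.comp ht)
    (fun i j => (hF' _ _).trans (ht' _ _)) hc
  have hft : ∀ i, F (t i) = .inl i := fun i => by rw [hff, sm_id hf]
  obtain ⟨y, hy, -⟩ := exists_other ht
  rcases hFy : F y with c | w
  · exfalso
    apply hy c
    apply hF
    rw [hft, hFy]
  refine ⟨w, ?_⟩
  have hV : BEmb (V1 l c1 c2 e N (p w) (g w w)) Y' := by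
    refine ⟨Sum.elim t (fun _ => y), ?_, ?_⟩
    · rintro (a | a) (b | b) h
      · simpa using ht h
      · exact absurd h (hy a)
      · exact absurd h.symm (hy b)
      · rfl
    · rintro (a | a) (b | b) <;> simp only [Sum.elim_inl, Sum.elim_inr] <;>
        rw [← hF'] <;> simp only [hft, hFy] <;> rfl
  have hVY : mkD _ (V1 l c1 c2 e N (p w) (g w w)) = mkD _ Y' := mkD_eq hV rfl
  have hfix : φ (mkD _ (V1 l c1 c2 e N (p w) (g w w))) = _ :=
    V1_fixd hφ l c1 c2 e (g w w) N (p w)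
  rw [hVY, hY, ← hVY] at hfix
  obtain ⟨E, hE, hE'⟩ := bemb_of_eq hfix
  obtain ⟨f', hf', hff'⟩ := Hr_uniq (t := fun i => E (.inl i)) (hE.comp Sum.inl_injective)
    (fun i j => (hE' _ _).trans (hL' _ _)) (by rw [Fintype.card_unit]; omega)
  have hEl : ∀ i, E (.inl i) = .inl i := fun i => by rw [hff', sm_id hf']
  have hEr : E (.inr ()) = .inr () := by
    rcases h : E (.inr ()) with c | u
    · rw [← hEl c] at h
      simpa using hE h
    · rfl
  refine ⟨?_, fun j => ⟨?_, ?_⟩⟩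
  · have := hE' (.inr ()) (.inr ())
    rw [hEr] at this
    exact this.symm
  · have := hE' (.inl j) (.inr ())
    rw [hEr, hEl] at this
    exact this.symm
  · have := hE' (.inr ()) (.inl j)
    rw [hEr, hEl] at this
    exact this.symm

theorem frame {φ : D ≃o D} (hφ : FixSmall φ) {l c1 c2 e : Bool} {N : ℕ} {W : Type}
    [Fintype W] [Nonempty (Fin N)] {g : W → W → Bool} {p : W → Fin N}
    (hp : Function.Injective p) (hN2 : 2 ≤ N) (hc : Fintype.card W < N) :
    ∃ g' : W → W → Bool, (∀ w, g' w w = g w w) ∧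
      φ (mkD _ (Hr l c1 c2 e N W g p)) = mkD _ (Hr l c1 c2 e N W g' p) := by
  obtain ⟨s, hs⟩ := img φ (Hr l c1 c2 e N W g p)
  have hT : BEmb (TT l N) s := (transfer hs (TT_fixd hφ l N)).1
    ⟨Sum.inl, Sum.inl_injective, fun _ _ => rfl⟩
  obtain ⟨L, hL, hL'⟩ := hT
  have hword := fun x hx => frame_word hφ hN2 hc hs hL hL' x hx
  have hTRx : ∀ x i, TR l s x (L i) → ∃ j, x = L j := by
    intro x i h
    by_contra hcon
    push Not at hcon
    obtain ⟨w, h1, h2⟩ := hword x (fun i h => hcon i h.symm)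
    have hl : g w w = l := h1.symm.trans h.1
    apply h.2.2
    rw [(h2 i).1, (h2 i).2, hl]
    simp
  have hwx : ∀ w, ∃ x, (∀ i, L i ≠ x) ∧ WordOf l c1 c2 e s L x (p w) (g w w) := by
    intro w
    have h1 : BEmb (V1 l c1 c2 e N (p w) (g w w)) (Hr l c1 c2 e N W g p) :=
      Hr_sub (f := id) strictMono_id (h := fun _ => w) (fun _ _ _ => rfl) (fun _ => rfl)
        (fun _ _ => rfl)
    have h2 := (transfer hs (V1_fixd hφ l c1 c2 e (g w w) N (p w))).1 h1
    obtain ⟨F, hF, hF'⟩ := h2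
    obtain ⟨f, hf, hff⟩ := uniq hL hL' hTRx (t := fun i => F (.inl i))
      (hF.comp Sum.inl_injective) (fun i j => hF' _ _) (by simpa using hc)
    have hl : ∀ i, F (.inl i) = L i := fun i => by rw [hff, sm_id hf]
    refine ⟨F (.inr ()), ?_, ?_, fun j => ⟨?_, ?_⟩⟩
    · intro i h
      rw [← hl] at h
      simpa using hF h
    · exact hF' (.inr ()) (.inr ())
    · rw [← hl]; exact hF' (.inl j) (.inr ())
    · rw [← hl]; exact hF' (.inr ()) (.inl j)
  choose K hK1 hK2 using hwx
  have hKinj : Function.Injective K := by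
    intro u v huv
    apply hp
    have a := hK2 u
    have b := hK2 v
    rw [huv] at a
    have hm : g u u = g v v := a.1.symm.trans b.1
    have a2 := (a.2 (p u)).2
    have b2 := (b.2 (p u)).2
    rw [a2, hm] at b2
    by_contra hne
    simp [Ne.symm hne] at b2
  refine ⟨fun u v => s (K u) (K v), fun w => (hK2 w).1, ?_⟩
  rw [hs]
  symm
  apply mkD_eq _ rfl
  refine ⟨Sum.elim L K, ?_, ?_⟩
  · rintro (a | a) (b | b) h
    · simpa using hL h
    · exact absurd h (hK1 b a)
    · exact absurd h.symm (hK1 a b)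
    · simpa using hKinj h
  · rintro (a | a) (b | b)
    · exact hL' a b
    · simp only [Sum.elim_inl, Sum.elim_inr, Hr]
      simp only [((hK2 b).2 a).1, (hK2 b).1]
    · simp only [Sum.elim_inl, Sum.elim_inr, Hr]
      simp only [((hK2 a).2 b).2, (hK2 a).1]
    · rfl

theorem pair_fixd {φ : D ≃o D} (hφ : FixSmall φ) {l c1 c2 e : Bool} {N : ℕ}
    [Nonempty (Fin N)] {g : Fin 2 → Fin 2 → Bool} {p : Fin 2 → Fin N}
    (hp : p 0 < p 1) (hN : 3 ≤ N) (hp1 : (p 1).val + 1 < N) :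
    Fixd φ _ (Hr l c1 c2 e N (Fin 2) g p) := by
  have hpi : Function.Injective p := by
    intro a b
    fin_cases a <;> fin_cases b <;> simp [hp.ne, hp.ne']
  obtain ⟨g', hg', hs⟩ := frame hφ (l := l) (c1 := c1) (c2 := c2) (e := e) (g := g) hpi
    (by omega) (by rw [Fintype.card_fin]; omega)
  have h1 : BEmb (Hr l c1 c2 e 3 (Fin 2) g ![0, 1]) (Hr l c1 c2 e N (Fin 2) g p) := by
    refine Hr_sub (f := ![p 0, p 1, ⟨(p 1).val + 1, hp1⟩]) ?_ (h := id) Function.injective_id ?_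
      (fun _ _ => rfl)
    · have h12 : p 1 < ⟨(p 1).val + 1, hp1⟩ := by simp [Fin.lt_def]
      have h02 := hp.trans h12
      intro a b hab
      fin_cases a <;> fin_cases b <;> first | exact hp | exact h12 | exact h02 | simp at hab
    · intro u
      fin_cases u <;> rfl
  have h2 := (transfer hs (hφ.fixd _ (by simp))).1 h1
  obtain ⟨f, hf, h, hh, hpf, hgg⟩ := Hr_struct (by simp) h2
  have h3 : p (h 0) < p (h 1) := by
    rw [hpf, hpf]
    exact hf (by simp)
  have h4 : h 0 = 0 ∧ h 1 = 1 := by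
    generalize h 0 = a at h3
    generalize h 1 = b at h3
    fin_cases a <;> fin_cases b <;> simp_all [hp.not_gt]
  have h5 : g' = g := by
    funext u v
    rw [← hgg]
    fin_cases u <;> fin_cases v <;> simp [h4]
  rw [h5] at hs
  exact hs

theorem gen_fixd {φ : D ≃o D} (hφ : FixSmall φ) {l c1 c2 e : Bool} {N : ℕ} {W : Type}
    [Fintype W] [Nonempty (Fin N)] {g : W → W → Bool} {p : W → Fin N}
    (hp : Function.Injective p) (hN : 3 ≤ N) (hc : Fintype.card W < N)
    (hp1 : ∀ w, (p w).val + 1 < N) :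
    Fixd φ _ (Hr l c1 c2 e N W g p) := by
  obtain ⟨g', hg', hs⟩ := frame hφ (l := l) (c1 := c1) (c2 := c2) (e := e) (g := g) hp
    (by omega) hc
  have main : ∀ u v, p u < p v → g' u v = g u v ∧ g' v u = g v u := by
    intro u v huv
    have hne : u ≠ v := by rintro rfl; exact lt_irrefl _ huv
    have h1 : BEmb (Hr l c1 c2 e N (Fin 2) (fun a b => g (![u, v] a) (![u, v] b))
        (fun a => p (![u, v] a))) (Hr l c1 c2 e N W g p) :=
      Hr_sub (f := id) strictMono_id (inj_pair hne) (fun _ => rfl) (fun _ _ => rfl)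
    have h2 := (transfer hs (pair_fixd hφ (by simpa using huv) hN (by simpa using hp1 v))).1 h1
    obtain ⟨f, hf, h, hh, hpf, hgg⟩ := Hr_struct hc h2
    have e0 : h 0 = u := hp (by rw [hpf, sm_id hf]; rfl)
    have e1 : h 1 = v := hp (by rw [hpf, sm_id hf]; rfl)
    have a := hgg 0 1
    have b := hgg 1 0
    rw [e0, e1] at a b
    exact ⟨a, b⟩
  have h5 : g' = g := by
    funext u v
    rcases lt_trichotomy (p u) (p v) with h | h | h
    · exact (main u v h).1
    · rw [hp h, hg']
    · exact (main v u h).2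
  rw [h5] at hs
  exact hs

theorem comb {X : Type} (x y a b : Bool → Bool → X)
    (hx : ∀ c1 c2 d1 d2, x c1 c2 = x d1 d2 → c1 = d1 ∧ c2 = d2)
    (hy : ∀ c1 c2 d1 d2, y c1 c2 = y d1 d2 → c1 = d1 ∧ c2 = d2)
    (h : ∀ c1 c2 d1 d2, ¬ (c1 = d1 ∧ c2 = d2) → y d1 d2 = a c1 c2 ∨ x c1 c2 = b d1 d2) :
    False := by
  have hx01 : x true true ≠ x true false := fun h => by simpa using hx _ _ _ _ h
  have hx02 : x true true ≠ x false true := fun h => by simpa using hx _ _ _ _ h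
  have hx12 : x true false ≠ x false true := fun h => by simpa using hx _ _ _ _ h
  have y01 : y true true ≠ y true false := fun h => by simpa using hy _ _ _ _ h
  have y02 : y true true ≠ y false true := fun h => by simpa using hy _ _ _ _ h
  have y03 : y true true ≠ y false false := fun h => by simpa using hy _ _ _ _ h
  have y12 : y true false ≠ y false true := fun h => by simpa using hy _ _ _ _ h
  have y13 : y true false ≠ y false false := fun h => by simpa using hy _ _ _ _ h
  have y23 : y false true ≠ y false false := fun h => by simpa using hy _ _ _ _ h
  have h01 := h true true true false (by simp)
  have h02 := h true true false true (by simp)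
  have h03 := h true true false false (by simp)
  have h10 := h true false true true (by simp)
  have h12 := h true false false true (by simp)
  have h13 := h true false false false (by simp)
  have h20 := h false true true true (by simp)
  have h21 := h false true true false (by simp)
  have h23 := h false true false false (by simp)
  clear h hx hy
  grind

theorem three_loops {n : ℕ} (hn : 13 ≤ n) (s : Fin n → Fin n → Bool) :
    ∃ l : Bool, ∃ u : Fin 3 → Fin n, Function.Injective u ∧ ∀ i, s (u i) (u i) ≠ l := by
  classical
  let A := Finset.univ.filter (fun x : Fin n => s x x = true)
  let B := Finset.univ.filter (fun x : Fin n => ¬ s x x = true)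
  have hAB : A.card + B.card = n := by
    have := Finset.card_filter_add_card_filter_not (s := (Finset.univ : Finset (Fin n)))
      (fun x : Fin n => s x x = true)
    simpa [A, B] using this
  have key : ∀ C : Finset (Fin n), 3 ≤ C.card → ∃ u : Fin 3 → Fin n, Function.Injective u ∧
      ∀ i, u i ∈ C := by
    intro C hC
    refine ⟨fun i => C.orderEmbOfCardLe hC i, (C.orderEmbOfCardLe hC).injective, fun i => ?_⟩
    exact Finset.orderEmbOfCardLe_mem C hC i
  by_cases h : 3 ≤ A.card
  · obtain ⟨u, hu, hu'⟩ := key A h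
    refine ⟨false, u, hu, fun i => ?_⟩
    have := hu' i
    simp [A] at this
    simp [this]
  · obtain ⟨u, hu, hu'⟩ := key B (by omega)
    refine ⟨true, u, hu, fun i => ?_⟩
    have := hu' i
    simpa [B] using this

theorem all_fixd {φ : D ≃o D} (hφ : FixSmall φ) (z : D) : φ z = z := by
  by_cases hz : nVerts z ≤ 12
  · exact hφ z hz
  obtain ⟨n, hn⟩ : ∃ n, n = nVerts z := ⟨_, rfl⟩
  have : Nonempty (Fin n) := ⟨⟨0, by omega⟩⟩
  obtain ⟨r, rfl⟩ := exists_mkD (Fin n) z (by simpa using hn.symm)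
  obtain ⟨s, hs⟩ := img φ r
  by_contra hcon
  have hnot : ¬ BEmb s r := fun h => hcon (hs.trans (mkD_eq h rfl))
  obtain ⟨l, u, hu, hul⟩ := three_loops (by omega) s
  have data : ∀ e c1 c2 : Bool, ∃ S : Set (Fin n), S.Nonempty ∧ (∀ x ∈ S, s x x = l) ∧
      ∀ x ∈ S, ∃ y₀, ∀ y, y ∉ S → y ≠ y₀ → s x y = (if s y y = l then e else c1) ∧
        s y x = (if s y y = l then e else c2) := by
    intro e c1 c2
    let p : Fin n → Fin (n + 2) := fun w => ⟨w.val, by omega⟩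
    have hp : Function.Injective p := by
      intro a b h
      apply Fin.ext
      simpa [p] using h
    have hfix : φ _ = _ := gen_fixd hφ (l := l) (c1 := c1) (c2 := c2) (e := e) (g := r) (p := p) hp
      (by omega) (by simp) (fun w => by simp [p])
    have h1 : BEmb r (Hr l c1 c2 e (n+2) (Fin n) r p) :=
      ⟨Sum.inr, Sum.inr_injective, fun _ _ => rfl⟩
    have h2 : BEmb s (Hr l c1 c2 e (n+2) (Fin n) r p) := by
      rw [← mkD_le, ← hs, ← hfix, φ.map_rel_iff, mkD_le]
      exact h1
    obtain ⟨F, hF, hF'⟩ := h2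
    refine ⟨{x | ∃ i, F x = .inl i}, ?_, ?_, ?_⟩
    · by_contra hne
      apply hnot
      have : ∀ x, ∃ w, F x = .inr w := by
        intro x
        rcases h : F x with i | w
        · exact absurd ⟨x, i, h⟩ hne
        · exact ⟨w, rfl⟩
      choose K hK using this
      refine ⟨K, ?_, ?_⟩
      · intro a b hab
        apply hF
        rw [hK, hK, hab]
      · intro a b
        rw [← hF', hK, hK]
        rfl
    · rintro x ⟨i, hi⟩
      rw [← hF', hi]
      simp [Hr, TT]
    · rintro x ⟨i, hi⟩
      have hy0 : ∃ y₀, ∀ y w, F y = .inr w → p w = i → y = y₀ := by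
        by_cases h : ∃ y₀ w, F y₀ = .inr w ∧ p w = i
        · obtain ⟨y₀, w, h1, h2⟩ := h
          refine ⟨y₀, fun y w' h1' h2' => ?_⟩
          apply hF
          rw [h1, h1', hp (h2.trans h2'.symm)]
        · exact ⟨x, fun y w h1 h2 => absurd ⟨y, w, h1, h2⟩ h⟩
      obtain ⟨y₀, hy₀⟩ := hy0
      refine ⟨y₀, fun y hy hyy => ?_⟩
      rcases hFy : F y with j | w
      · exact absurd ⟨j, hFy⟩ hy
      have hpw : p w ≠ i := fun h => hyy (hy₀ y w hFy h)
      have hyl : s y y = r w w := by rw [← hF', hFy]; rfl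
      rw [hyl, ← hF', ← hF', hFy, hi]
      simp [Hr, hpw]
  choose S hne hloop hexc using data
  have hdisj : ∀ e e' c1 c2 d1 d2 x, x ∈ S e c1 c2 → x ∈ S e' d1 d2 → c1 = d1 ∧ c2 = d2 := by
    intro e e' c1 c2 d1 d2 x hx hx'
    obtain ⟨y, hy⟩ := hexc e c1 c2 x hx
    obtain ⟨y', hy'⟩ := hexc e' d1 d2 x hx'
    have hui : ∃ i, u i ≠ y ∧ u i ≠ y' := by
      by_contra hall
      push Not at hall
      have n01 : u 0 ≠ u 1 := fun h => by simpa using hu h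
      have n02 : u 0 ≠ u 2 := fun h => by simpa using hu h
      have n12 : u 1 ≠ u 2 := fun h => by simpa using hu h
      have := hall 0
      have := hall 1
      have := hall 2
      grind
    obtain ⟨i, h1, h2⟩ := hui
    have a := hy (u i) (fun h => hul i (hloop _ _ _ _ h)) h1
    have b := hy' (u i) (fun h => hul i (hloop _ _ _ _ h)) h2
    simp only [hul i, if_false] at a b
    exact ⟨a.1.symm.trans b.1, a.2.symm.trans b.2⟩
  choose x hx using fun c1 c2 => hne false c1 c2
  choose y hy using fun c1 c2 => hne true c1 c2
  choose a ha using fun c1 c2 => hexc false c1 c2 (x c1 c2) (hx c1 c2)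
  choose b hb using fun c1 c2 => hexc true c1 c2 (y c1 c2) (hy c1 c2)
  apply comb x y a b
  · intro c1 c2 d1 d2 h
    have h1 := hx d1 d2
    rw [← h] at h1
    exact hdisj _ _ _ _ _ _ _ (hx c1 c2) h1
  · intro c1 c2 d1 d2 h
    have h1 := hy d1 d2
    rw [← h] at h1
    exact hdisj _ _ _ _ _ _ _ (hy c1 c2) h1
  · intro c1 c2 d1 d2 h
    by_contra hno
    push Not at hno
    have A := (ha c1 c2 (y d1 d2)
      (fun h' => h (hdisj _ _ _ _ _ _ _ h' (hy d1 d2))) hno.1).1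
    have B := (hb d1 d2 (x c1 c2)
      (fun h' => h (hdisj _ _ _ _ _ _ _ (hx c1 c2) h')) hno.2).2
    rw [hloop _ _ _ _ (hy d1 d2), if_pos rfl] at A
    rw [hloop _ _ _ _ (hx c1 c2), if_pos rfl] at B
    rw [A] at B
    exact Bool.noConfusion B

end Helpers

/-- order automorphisms of `(D, ⊑)` agreeing on all digraphs with at most
12 vertices are equal. -/
theorem eq_of_agree_on_first_twelve_levels (f g : D → D)
    (hf : IsOrderAuto f) (hg : IsOrderAuto g)
    (h : ∀ x : D, nVerts x ≤ 12 → f x = g x) : f = g := by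
  let F : D ≃o D := ⟨Equiv.ofBijective f hf.1, fun {a b} => (hf.2 a b).symm⟩
  let G : D ≃o D := ⟨Equiv.ofBijective g hg.1, fun {a b} => (hg.2 a b).symm⟩
  have hs : FixSmall (F.trans G.symm) := by
    intro x hx
    have : F x = G x := h x hx
    simp [this]
  funext x
  have h1 := all_fixd hs x
  have h2 : F x = G x := by
    rw [OrderIso.trans_apply] at h1
    rw [← G.apply_symm_apply (F x), h1]
  exact h2
end

section
/- Every order automorphism φ of (D, ⊑) preserves the number of vertices: for every G ∈ D, the digraph φ(G) has the same number of vertices as G. In particular, for every n ≥ 1, φ maps the set D_n = {G ∈ D : G has at most n vertices} onto itself. -/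
theorem nVerts_toD (G : FinDigraph) : nVerts (toD G) = G.n := rfl

theorem nVerts_lt {x y : D} (h : x ≤ y) (hne : x ≠ y) : nVerts x < nVerts y := by
  obtain ⟨G, H, rfl, rfl, e, he⟩ := h
  rw [nVerts_toD, nVerts_toD]
  have hle : G.n ≤ H.n := by simpa using Fintype.card_le_of_embedding e
  refine lt_of_le_of_ne hle fun heq => hne ?_
  have hb : Function.Bijective e :=
    (Fintype.bijective_iff_injective_and_card e).2 ⟨e.injective, by simpa using heq⟩
  exact Quotient.sound ⟨Equiv.ofBijective e hb, he⟩

theorem exists_below {x : D} {n : ℕ} (hn : 0 < n) (h : nVerts x = n + 1) :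
    ∃ y : D, y ≤ x ∧ nVerts y = n := by
  obtain ⟨G, rfl⟩ := Quotient.exists_rep x
  have hG : G.n = n + 1 := h
  have hle : n ≤ G.n := by omega
  refine ⟨toD ⟨n, hn, fun u v => G.adj (Fin.castLE hle u) (Fin.castLE hle v)⟩, ?_, rfl⟩
  exact ⟨_, G, rfl, rfl, Fin.castLEEmb hle, fun u v => rfl⟩

theorem nVerts_le_of_auto (f : D → D) (hf : IsOrderAuto f) (n : ℕ) :
    ∀ x : D, nVerts x = n → n ≤ nVerts (f x) := by
  induction n with
  | zero => intro x _; exact Nat.zero_le _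
  | succ n ih =>
    intro x hx
    rcases Nat.eq_zero_or_pos n with rfl | hn
    · exact nVerts_pos _
    · obtain ⟨y, hy, hyn⟩ := exists_below hn hx
      have hne : y ≠ x := by rintro rfl; omega
      have h1 := ih y hyn
      have h2 := nVerts_lt ((hf.2 y x).1 hy) (fun h => hne (hf.1.1 h))
      omega

/-- every order automorphism of `(D, ⊑)` preserves the number of vertices;
in particular it maps each `D_n` (`n ≥ 1`) onto itself. -/
theorem orderAuto_preserves_nVerts (f : D → D) (hf : IsOrderAuto f) :
    (∀ x : D, nVerts (f x) = nVerts x) ∧ ∀ n : ℕ, 1 ≤ n → f '' Dn n = Dn n := by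
  have key : ∀ x : D, nVerts (f x) = nVerts x := by
    intro x
    obtain ⟨g, hgl, hgr⟩ := Function.bijective_iff_has_inverse.1 hf.1
    have hg : IsOrderAuto g := by
      refine ⟨Function.bijective_iff_has_inverse.2 ⟨f, hgr, hgl⟩, fun a b => ?_⟩
      rw [hf.2 (g a) (g b), hgr a, hgr b]
    have h1 := nVerts_le_of_auto f hf _ x rfl
    have h2 := nVerts_le_of_auto g hg _ (f x) rfl
    rw [hgl x] at h2
    exact le_antisymm h2 h1
  refine ⟨key, fun n _ => ?_⟩
  ext y
  constructor
  · rintro ⟨x, hx, rfl⟩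
    show nVerts (f x) ≤ n
    rw [key]; exact hx
  · intro hy
    obtain ⟨x, rfl⟩ := hf.1.2 y
    refine ⟨x, ?_, rfl⟩
    show nVerts x ≤ n
    rw [← key]; exact hy
end

section
/- Extension Lemma (extendibility criterion): Let n ≥ 1 and let φ be an order automorphism of D_n. Then there exists an order automorphism ψ of D_{n+1} whose restriction to D_n equals φ if and only if φ(H_{n+1}) = H_{n+1}, where φ acts on H_{n+1} by φ(S, k) = ({φ(H) : H ∈ S}, k) applied element-wise. -/
namespace ExtLem

theorem emb_trans {G H K : FinDigraph} (h1 : G.Emb H) (h2 : H.Emb K) : G.Emb K := by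
  obtain ⟨f, hf⟩ := h1
  obtain ⟨g, hg⟩ := h2
  exact ⟨f.trans g, fun u v => (hg (f u) (f v)).trans (hf u v)⟩

theorem emb_of_iso {G H : FinDigraph} (h : G.Iso H) : G.Emb H := by
  obtain ⟨e, he⟩ := h
  exact ⟨e.toEmbedding, he⟩

theorem toD_eq {G H : FinDigraph} : toD G = toD H ↔ G.Iso H := Quotient.eq

theorem toD_le {G H : FinDigraph} : toD G ≤ toD H ↔ G.Emb H := by
  constructor
  · rintro ⟨G', H', h1, h2, h⟩
    exact emb_trans (emb_of_iso (toD_eq.1 h1)) (emb_trans h (emb_of_iso (toD_eq.1 h2.symm)))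
  · exact fun h => ⟨G, H, rfl, rfl, h⟩

theorem exists_rep (x : D) : ∃ G, toD G = x := Quotient.exists_rep x

theorem nVerts_toD (G : FinDigraph) : nVerts (toD G) = G.n := rfl

theorem le_refl' (x : D) : x ≤ x := by
  obtain ⟨G, rfl⟩ := exists_rep x
  exact toD_le.2 (emb_of_iso (FinDigraph.iso_refl G))

theorem le_trans' {x y z : D} (h1 : x ≤ y) (h2 : y ≤ z) : x ≤ z := by
  obtain ⟨G, rfl⟩ := exists_rep x
  obtain ⟨H, rfl⟩ := exists_rep y
  obtain ⟨K, rfl⟩ := exists_rep z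
  exact toD_le.2 (emb_trans (toD_le.1 h1) (toD_le.1 h2))

theorem nVerts_mono {x y : D} (h : x ≤ y) : nVerts x ≤ nVerts y := by
  obtain ⟨G, rfl⟩ := exists_rep x
  obtain ⟨H, rfl⟩ := exists_rep y
  obtain ⟨f, -⟩ := toD_le.1 h
  simpa [nVerts_toD] using Fintype.card_le_of_embedding f

theorem eq_of_le {x y : D} (h : x ≤ y) (hn : nVerts y ≤ nVerts x) : x = y := by
  have hn' : nVerts x = nVerts y := Nat.le_antisymm (nVerts_mono h) hn
  obtain ⟨G, rfl⟩ := exists_rep x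
  obtain ⟨H, rfl⟩ := exists_rep y
  obtain ⟨f, hf⟩ := toD_le.1 h
  rw [toD_eq]
  have hb : Function.Bijective f :=
    (Fintype.bijective_iff_injective_and_card f).2 ⟨f.injective, by simpa [nVerts_toD] using hn'⟩
  exact ⟨Equiv.ofBijective f hb, hf⟩

theorem del (H : FinDigraph) (h2 : 2 ≤ H.n) (v : Fin H.n) :
    ∃ K : FinDigraph, K.n + 1 = H.n ∧ K.Emb H ∧
      ∀ (G : FinDigraph) (f : Fin G.n ↪ Fin H.n), (∀ u w, H.adj (f u) (f w) = G.adj u w) →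
        (∀ u, f u ≠ v) → G.Emb K := by
  obtain ⟨n, pos, adj⟩ := H
  cases n with
  | zero => omega
  | succ m =>
    have hm : 0 < m := by simp at h2; omega
    refine ⟨⟨m, hm, fun u w => adj (Fin.succAbove v u) (Fin.succAbove v w)⟩, rfl,
      ⟨Fin.succAboveEmb v, fun _ _ => rfl⟩, ?_⟩
    intro G f hf hv
    have := fun u => Fin.exists_succAbove_eq (hv u)
    choose g hg using this
    refine ⟨⟨g, fun a b hab => f.injective ?_⟩, fun u w => ?_⟩
    · rw [← hg a, ← hg b, hab]
    · show adj (Fin.succAbove v (g u)) (Fin.succAbove v (g w)) = _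
      rw [hg, hg]; exact hf u w

theorem pos_nVerts (x : D) : 0 < nVerts x := by
  obtain ⟨G, rfl⟩ := exists_rep x
  exact G.pos

theorem exists_mid {x y : D} (h : x ≤ y) (hlt : nVerts x < nVerts y) :
    ∃ z, x ≤ z ∧ z ≤ y ∧ nVerts z + 1 = nVerts y := by
  have hp := pos_nVerts x
  obtain ⟨G, rfl⟩ := exists_rep x
  obtain ⟨H, rfl⟩ := exists_rep y
  obtain ⟨f, hf⟩ := toD_le.1 h
  rw [nVerts_toD] at *
  rw [nVerts_toD] at *
  have : ∃ v, ∀ u, f u ≠ v := by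
    by_contra! hc
    have := Fintype.card_le_of_surjective f hc
    simp at this
    omega
  obtain ⟨v, hv⟩ := this
  obtain ⟨K, h1, h2, h3⟩ := del H (by omega) v
  exact ⟨toD K, toD_le.2 (h3 G f hf hv), toD_le.2 h2, h1⟩

theorem exists_low {y : D} (h : 2 ≤ nVerts y) : ∃ z, z ≤ y ∧ nVerts z + 1 = nVerts y := by
  obtain ⟨H, rfl⟩ := exists_rep y
  rw [nVerts_toD] at *
  obtain ⟨K, h1, h2, h3⟩ := del H h ⟨0, by omega⟩
  exact ⟨toD K, toD_le.2 h2, h1⟩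

theorem mem_lcov {x y : D} : y ∈ lcov x ↔ y ≤ x ∧ nVerts y + 1 = nVerts x := by
  constructor
  · rintro ⟨h1, h2, h3⟩
    refine ⟨h1, ?_⟩
    have hlt : nVerts y < nVerts x := by
      by_contra hc
      exact h2 (eq_of_le h1 (by omega))
    obtain ⟨z, hz1, hz2, hz3⟩ := exists_mid h1 hlt
    rcases h3 z hz1 hz2 with rfl | rfl
    · exact hz3
    · omega
  · rintro ⟨h1, h2⟩
    refine ⟨h1, by rintro rfl; omega, fun z hz1 hz2 => ?_⟩
    have a := nVerts_mono hz1
    have b := nVerts_mono hz2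
    by_cases hc : nVerts z ≤ nVerts y
    · exact Or.inl (eq_of_le hz1 hc).symm
    · exact Or.inr (eq_of_le hz2 (by omega))

theorem nVerts_eq_of_lcov {x y : D} (h2 : 2 ≤ nVerts x) (h : lcov y = lcov x) :
    nVerts y = nVerts x := by
  obtain ⟨z, hz⟩ := exists_low h2
  have h1 := mem_lcov.2 hz
  rw [← h] at h1
  have := (mem_lcov.1 h1).2
  omega

abbrev Lev (m : ℕ) := {x : D // nVerts x = m}

instance (m : ℕ) : Finite (Lev m) := by
  rcases Nat.eq_zero_or_pos m with rfl | hm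
  · have : IsEmpty (Lev 0) := ⟨fun x => by have := pos_nVerts x.1; have := x.2; omega⟩
    infer_instance
  · refine Finite.of_surjective
      (fun a : Fin m → Fin m → Bool => (⟨toD ⟨m, hm, a⟩, rfl⟩ : Lev m)) ?_
    rintro ⟨x, hx⟩
    obtain ⟨⟨k, p, a⟩, rfl⟩ := exists_rep x
    have hx' : k = m := hx
    subst hx'
    exact ⟨a, rfl⟩

theorem fiber_equiv {L A : Type} [Finite L] (l : L → A) (g : A ≃ A)
    (h : ∀ S, Nat.card {x // l x = S} = Nat.card {x // l x = g S}) :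
    ∃ e : L ≃ L, ∀ x, l (e x) = g (l x) := by
  have h' : ∀ S, Nonempty ({x // l x = S} ≃ {x // l x = g S}) := fun S => ⟨(Finite.equivFin _).trans ((finCongr (h S)).trans (Finite.equivFin _).symm)⟩
  have F := fun S => Classical.choice (h' S)
  refine ⟨(Equiv.sigmaFiberEquiv l).symm.trans
    ((Equiv.sigmaCongr g F).trans (Equiv.sigmaFiberEquiv l)), fun x => ?_⟩
  exact (F (l x) ⟨x, rfl⟩).2

/-- lower covers as a subset of `Dn n`. -/
def lo (n : ℕ) (x : Lev (n + 1)) : Set (Dn n) := {y | (y : D) ∈ lcov x.1}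

theorem lcov_sub {n : ℕ} {x y : D} (hx : nVerts x = n + 1) (h : y ∈ lcov x) : y ∈ Dn n := by
  have := (mem_lcov.1 h).2
  show nVerts y ≤ n
  omega

theorem lcov_eq_image {n : ℕ} (x : Lev (n + 1)) : lcov x.1 = Subtype.val '' lo n x := by
  ext y
  constructor
  · intro h
    exact ⟨⟨y, lcov_sub x.2 h⟩, h, rfl⟩
  · rintro ⟨y, h, rfl⟩
    exact h

theorem lcov_eq_iff {n : ℕ} (x y : Lev (n + 1)) : lcov x.1 = lcov y.1 ↔ lo n x = lo n y := by
  rw [lcov_eq_image, lcov_eq_image]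
  exact (Set.image_injective.2 Subtype.val_injective).eq_iff

theorem setImage_lcov {n : ℕ} (φ : ↥(Dn n) → ↥(Dn n)) (x : Lev (n + 1)) :
    setImage φ (lcov x.1) = Subtype.val '' (φ '' lo n x) := by
  ext z
  constructor
  · rintro ⟨y, h, hy, rfl⟩
    exact ⟨_, ⟨⟨y, h⟩, hy, rfl⟩, rfl⟩
  · rintro ⟨_, ⟨y, hy, rfl⟩, rfl⟩
    exact ⟨y.1, y.2, hy, rfl⟩

theorem lcov_eq_setImage {n : ℕ} (φ : ↥(Dn n) → ↥(Dn n)) (x y : Lev (n + 1)) :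
    lcov y.1 = setImage φ (lcov x.1) ↔ lo n y = φ '' lo n x := by
  rw [setImage_lcov, lcov_eq_image]
  exact (Set.image_injective.2 Subtype.val_injective).eq_iff

theorem scount_eq {n : ℕ} (hn : 1 ≤ n) (x : Lev (n + 1)) :
    scount x.1 = Nat.card {y : Lev (n + 1) // lo n y = lo n x} := by
  refine Nat.card_congr ⟨fun y => ⟨⟨y.1, ?_⟩, ?_⟩, fun y => ⟨y.1.1, (lcov_eq_iff _ _).2 y.2⟩,
    fun _ => rfl, fun _ => rfl⟩
  · rw [nVerts_eq_of_lcov _ y.2, x.2]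
    have := x.2; omega
  · exact (lcov_eq_iff ⟨y.1, _⟩ x).1 y.2

/-- The condition on `Hset` in terms of `lo`. -/
theorem forward {n : ℕ} (hn : 1 ≤ n) (φ : ↥(Dn n) → ↥(Dn n)) (hφ : Function.Bijective φ)
    (e : Lev (n + 1) ≃ Lev (n + 1)) (he : ∀ x, lo n (e x) = φ '' lo n x) :
    HsetImage φ (Hset (n + 1)) = Hset (n + 1) := by
  have hinj : Function.Injective (fun S : Set (Dn n) => φ '' S) := Set.image_injective.2 hφ.1
  have hs : ∀ x, scount (e x).1 = scount x.1 := by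
    intro x
    rw [scount_eq hn, scount_eq hn]
    refine (Nat.card_congr (e.subtypeEquiv fun y => ?_)).symm
    rw [he, he]
    exact hinj.eq_iff.symm
  have key : ∀ x : Lev (n+1), (setImage φ (lcov x.1), scount x.1) =
      (lcov (e x).1, scount (e x).1) := by
    intro x
    rw [hs, (lcov_eq_setImage φ x (e x)).2 (he x)]
  ext p
  constructor
  · rintro ⟨_, ⟨x, hx, rfl⟩, rfl⟩
    exact ⟨(e ⟨x, hx⟩).1, (e ⟨x, hx⟩).2, key ⟨x, hx⟩⟩
  · rintro ⟨x, hx, rfl⟩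
    refine ⟨_, ⟨(e.symm ⟨x, hx⟩).1, (e.symm ⟨x, hx⟩).2, rfl⟩, ?_⟩
    have := key (e.symm ⟨x, hx⟩)
    rw [e.apply_symm_apply] at this
    exact this.symm

theorem backward {n : ℕ} (hn : 1 ≤ n) (φ : ↥(Dn n) → ↥(Dn n)) (hφ : Function.Bijective φ)
    (h : HsetImage φ (Hset (n + 1)) = Hset (n + 1)) :
    ∃ e : Lev (n + 1) ≃ Lev (n + 1), ∀ x, lo n (e x) = φ '' lo n x := by
  have hinj : Function.Injective (fun S : Set (Dn n) => φ '' S) := Set.image_injective.2 hφ.1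
  have hsur : Function.Surjective (fun S : Set (Dn n) => φ '' S) := Set.image_surjective.2 hφ.2
  refine fiber_equiv (lo n) (Equiv.ofBijective _ ⟨hinj, hsur⟩) fun S => ?_
  change _ = Nat.card {x // lo n x = φ '' S}
  by_cases hS : ∃ x, lo n x = S
  · obtain ⟨x, rfl⟩ := hS
    have : (setImage φ (lcov x.1), scount x.1) ∈ Hset (n + 1) := by
      rw [← h]
      exact ⟨_, ⟨x.1, x.2, rfl⟩, rfl⟩
    obtain ⟨y, hy, hxy⟩ := this
    rw [Prod.mk.injEq] at hxy
    have h1 := (lcov_eq_setImage φ x ⟨y, hy⟩).1 hxy.1.symm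
    rw [← h1, ← scount_eq hn, ← scount_eq hn]
    exact hxy.2
  · have hS' : ¬ ∃ x, lo n x = φ '' S := by
      rintro ⟨x, hx⟩
      have : (lcov x.1, scount x.1) ∈ HsetImage φ (Hset (n + 1)) := by
        rw [h]; exact ⟨x.1, x.2, rfl⟩
      obtain ⟨_, ⟨y, hy, rfl⟩, hxy⟩ := this
      rw [Prod.mk.injEq] at hxy
      have h1 := (lcov_eq_setImage φ ⟨y, hy⟩ x).1 hxy.1
      exact hS ⟨⟨y, hy⟩, hinj (h1.symm.trans hx)⟩
    push Not at hS hS'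
    have : IsEmpty {x // lo n x = S} := ⟨fun x => hS _ x.2⟩
    have : IsEmpty {x // lo n x = φ '' S} := ⟨fun x => hS' _ x.2⟩
    simp

theorem exists_equiv {n : ℕ} (φ : ↥(Dn n) → ↥(Dn n)) (hφ : IsOrderAuto φ)
    (ψ : ↥(Dn (n + 1)) → ↥(Dn (n + 1))) (hψ : IsOrderAuto ψ)
    (hx : ∀ (x : D) (hx : x ∈ Dn n), (↑(ψ ⟨x, mem_Dn_succ hx⟩) : D) = ↑(φ ⟨x, hx⟩)) :
    ∃ e : Lev (n + 1) ≃ Lev (n + 1), ∀ x, lo n (e x) = φ '' lo n x := by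
  have hmem : ∀ x : Dn (n + 1), (ψ x).1 ∈ Dn n ↔ x.1 ∈ Dn n := by
    intro x
    constructor
    · intro h
      obtain ⟨y, hy⟩ := hφ.1.2 ⟨_, h⟩
      have h1 := hx y.1 y.2
      rw [Subtype.coe_eta, hy] at h1
      have h2 := hψ.1.1 (Subtype.ext h1)
      rw [← h2]
      exact y.2
    · intro h
      have h1 := hx x.1 h
      rw [Subtype.coe_eta] at h1
      rw [h1]
      exact (φ _).2
  have hlev : ∀ x : Dn (n + 1), nVerts (ψ x).1 = n + 1 ↔ nVerts x.1 = n + 1 := by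
    intro x
    have a : nVerts (ψ x).1 ≤ n + 1 := (ψ x).2
    have b : nVerts x.1 ≤ n + 1 := x.2
    have c : nVerts (ψ x).1 ≤ n ↔ nVerts x.1 ≤ n := hmem x
    omega
  let f : Lev (n + 1) → Lev (n + 1) := fun x =>
    ⟨(ψ ⟨x.1, x.2.le⟩).1, (hlev ⟨x.1, x.2.le⟩).2 x.2⟩
  have hf : Function.Injective f := by
    intro x y hxy
    have h1 : (ψ ⟨x.1, x.2.le⟩).1 = (ψ ⟨y.1, y.2.le⟩).1 := by
      have q := congrArg Subtype.val hxy
      exact q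
    have h2 := hψ.1.1 (Subtype.ext h1)
    exact Subtype.ext (by have q := congrArg Subtype.val h2; exact q)
  refine ⟨Equiv.ofBijective f (Finite.injective_iff_bijective.1 hf), fun x => ?_⟩
  have hcov : ∀ y : Dn n, (φ y).1 ∈ lcov (f x).1 ↔ y.1 ∈ lcov x.1 := by
    intro y
    have hy := hx y.1 y.2
    rw [Subtype.coe_eta] at hy
    have hle : ∀ z : Dn (n + 1), ∀ w : Dn (n + 1), (ψ z).1 ≤ (ψ w).1 ↔ z.1 ≤ w.1 :=
      fun z w => (hψ.2 z w).symm
    have hinj : ∀ z : Dn (n + 1), ∀ w : Dn (n + 1), (ψ z).1 = (ψ w).1 ↔ z.1 = w.1 := by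
      intro z w
      rw [← Subtype.ext_iff, ← Subtype.ext_iff]
      exact hψ.1.1.eq_iff
    rw [← hy]
    show (_ ∧ _ ∧ _) ↔ (_ ∧ _ ∧ _)
    refine and_congr (hle _ _) (and_congr (not_congr (hinj _ _)) ?_)
    constructor
    · intro h z h1 h2
      have hz : z ∈ Dn (n + 1) := (nVerts_mono h2).trans x.2.le
      have := h (ψ ⟨z, hz⟩).1 ((hle _ _).2 h1) ((hle _ _).2 h2)
      exact this.imp (hinj _ _).1 (hinj _ _).1
    · intro h z h1 h2
      have hz : z ∈ Dn (n + 1) := (nVerts_mono h2).trans (f x).2.le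
      obtain ⟨w, hw⟩ := hψ.1.2 ⟨z, hz⟩
      have hw' : z = (ψ w).1 := by rw [hw]
      subst hw'
      have := h w.1 ((hle _ _).1 h1) ((hle _ _).1 h2)
      exact this.imp (hinj _ _).2 (hinj _ _).2
  ext z
  obtain ⟨y, rfl⟩ := hφ.1.2 z
  rw [hφ.1.1.mem_set_image]
  exact hcov y

theorem le_lev_iff {n : ℕ} (x : Dn n) (y : Lev (n + 1)) :
    x.1 ≤ y.1 ↔ ∃ z ∈ lo n y, x.1 ≤ z.1 := by
  constructor
  · intro h
    have a : nVerts x.1 ≤ n := x.2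
    have b := y.2
    obtain ⟨z, h1, h2, h3⟩ := exists_mid h (by omega)
    exact ⟨⟨z, show nVerts z ≤ n by omega⟩, mem_lcov.2 ⟨h2, h3⟩, h1⟩
  · rintro ⟨z, hz, h⟩
    exact le_trans' h (mem_lcov.1 hz).1

theorem build {n : ℕ} (φ : ↥(Dn n) → ↥(Dn n)) (hφ : IsOrderAuto φ)
    (e : Lev (n + 1) ≃ Lev (n + 1)) (he : ∀ x, lo n (e x) = φ '' lo n x) :
    ∃ ψ : ↥(Dn (n + 1)) → ↥(Dn (n + 1)), IsOrderAuto ψ ∧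
        ∀ (x : D) (hx : x ∈ Dn n), (↑(ψ ⟨x, mem_Dn_succ hx⟩) : D) = ↑(φ ⟨x, hx⟩) := by
  classical
  let i : Dn n → Dn (n + 1) := fun x => ⟨x.1, mem_Dn_succ x.2⟩
  let j : Lev (n + 1) → Dn (n + 1) := fun x => ⟨x.1, x.2.le⟩
  have hlev : ∀ x : Dn (n + 1), ¬ x.1 ∈ Dn n → nVerts x.1 = n + 1 := by
    intro x hx
    have a : nVerts x.1 ≤ n + 1 := x.2
    have b : ¬ nVerts x.1 ≤ n := hx
    omega
  have hcase : ∀ x : Dn (n + 1), (∃ y, x = i y) ∨ ∃ y, x = j y := by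
    intro x
    by_cases h : x.1 ∈ Dn n
    · exact Or.inl ⟨⟨x.1, h⟩, rfl⟩
    · exact Or.inr ⟨⟨x.1, hlev x h⟩, rfl⟩
  let ψ : Dn (n + 1) → Dn (n + 1) := fun x =>
    if h : x.1 ∈ Dn n then i (φ ⟨x.1, h⟩) else j (e ⟨x.1, hlev x h⟩)
  have hi : ∀ x, ψ (i x) = i (φ x) := fun x => dif_pos x.2
  have hj : ∀ x, ψ (j x) = j (e x) := by
    intro x
    have : ¬ x.1 ∈ Dn n := by
      intro h
      have h' : nVerts x.1 ≤ n := h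
      have := x.2
      omega
    exact dif_neg this
  have iinj : ∀ x y, i x = i y → x = y := fun x y h => Subtype.ext (by have q := congrArg Subtype.val h; exact q)
  have jinj : ∀ x y, j x = j y → x = y := fun x y h => Subtype.ext (by have q := congrArg Subtype.val h; exact q)
  have ji : ∀ x y, ¬ (j x).1 ≤ (i y).1 := by
    intro x y h
    have a := nVerts_mono h
    have b : nVerts y.1 ≤ n := y.2
    have c : nVerts x.1 = n + 1 := x.2
    have d : nVerts x.1 ≤ nVerts y.1 := a
    omega
  have ji' : ∀ x y, j x ≠ i y := by
    intro x y h
    apply ji x y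
    rw [h]
    exact le_refl' _
  refine ⟨ψ, ⟨⟨?_, ?_⟩, ?_⟩, ?_⟩
  · intro x y h
    rcases hcase x with ⟨x, rfl⟩ | ⟨x, rfl⟩ <;> rcases hcase y with ⟨y, rfl⟩ | ⟨y, rfl⟩
    · rw [hi, hi] at h
      rw [hφ.1.1 (iinj _ _ h)]
    · rw [hi, hj] at h
      exact absurd h.symm (ji' _ _)
    · rw [hi, hj] at h
      exact absurd h (ji' _ _)
    · rw [hj, hj] at h
      rw [e.injective (jinj _ _ h)]
  · intro y
    rcases hcase y with ⟨y, rfl⟩ | ⟨y, rfl⟩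
    · obtain ⟨x, rfl⟩ := hφ.1.2 y
      exact ⟨i x, hi x⟩
    · obtain ⟨x, rfl⟩ := e.surjective y
      exact ⟨j x, hj x⟩
  · intro x y
    rcases hcase x with ⟨x, rfl⟩ | ⟨x, rfl⟩ <;> rcases hcase y with ⟨y, rfl⟩ | ⟨y, rfl⟩
    · rw [hi, hi]
      exact hφ.2 x y
    · rw [hi, hj]
      show x.1 ≤ y.1 ↔ (φ x).1 ≤ (e y).1
      rw [le_lev_iff, le_lev_iff, he]
      constructor
      · rintro ⟨z, hz, h⟩
        exact ⟨φ z, ⟨z, hz, rfl⟩, (hφ.2 x z).1 h⟩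
      · rintro ⟨_, ⟨z, hz, rfl⟩, h⟩
        exact ⟨z, hz, (hφ.2 x z).2 h⟩
    · rw [hi, hj]
      exact iff_of_false (ji _ _) (ji _ _)
    · rw [hj, hj]
      show x.1 ≤ y.1 ↔ (e x).1 ≤ (e y).1
      have hl : ∀ a b : Lev (n + 1), a.1 ≤ b.1 ↔ a = b := by
        intro a b
        constructor
        · intro h
          exact Subtype.ext (eq_of_le h (by rw [a.2, b.2]))
        · rintro rfl
          exact le_refl' _
      rw [hl, hl, e.injective.eq_iff]
  · intro x hx
    exact congrArg Subtype.val (hi ⟨x, hx⟩)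

end ExtLem

/-- Extension Lemma, extendibility criterion: an order automorphism `φ`
of `D_n` extends to an order automorphism of `D_{n+1}` iff `φ(H_{n+1}) = H_{n+1}`. -/
theorem extension_lemma_extendibility (n : ℕ) (hn : 1 ≤ n)
    (φ : ↥(Dn n) → ↥(Dn n)) (hφ : IsOrderAuto φ) :
    (∃ ψ : ↥(Dn (n + 1)) → ↥(Dn (n + 1)), IsOrderAuto ψ ∧
        ∀ (x : D) (hx : x ∈ Dn n), (↑(ψ ⟨x, mem_Dn_succ hx⟩) : D) = ↑(φ ⟨x, hx⟩)) ↔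
      HsetImage φ (Hset (n + 1)) = Hset (n + 1) := by
  constructor
  · rintro ⟨ψ, hψ, hx⟩
    obtain ⟨e, he⟩ := ExtLem.exists_equiv φ hφ ψ hψ hx
    exact ExtLem.forward hn φ hφ.1 e he
  · intro h
    obtain ⟨e, he⟩ := ExtLem.backward hn φ hφ.1 h
    exact ExtLem.build φ hφ e he
end

section
/- Aut₃(D) = Aut₃(D₄): the set of restrictions to D₃ of order automorphisms of (D, ⊑) coincides with the set of restrictions to D₃ of order automorphisms of D₄; moreover this group Aut₃(D₄) has exactly 768 elements. -/
namespace Prf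
open FinDigraph

theorem le_iff (G H : FinDigraph) : toD G ≤ toD H ↔ Emb G H := by
  constructor
  · rintro ⟨G', H', h1, h2, f, hf⟩
    obtain ⟨e, he⟩ : Iso G G' := Quotient.exact h1
    obtain ⟨e', he'⟩ : Iso H H' := Quotient.exact h2
    refine ⟨(e.toEmbedding.trans f).trans e'.symm.toEmbedding, fun u v => ?_⟩
    rw [← he', ← he, ← hf]
    simp
  · intro h
    exact ⟨G, H, rfl, rfl, h⟩

theorem toD_surj (x : D) : ∃ G, x = toD G := by
  induction x using Quotient.inductionOn with
  | h G => exact ⟨G, rfl⟩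

theorem nV_toD (G : FinDigraph) : nVerts (toD G) = G.n := rfl

theorem le_rfl' (x : D) : x ≤ x := by
  obtain ⟨G, rfl⟩ := toD_surj x
  exact (le_iff _ _).2 ⟨Function.Embedding.refl _, fun _ _ => rfl⟩

theorem le_tr {x y z : D} (h : x ≤ y) (h' : y ≤ z) : x ≤ z := by
  obtain ⟨G, rfl⟩ := toD_surj x
  obtain ⟨H, rfl⟩ := toD_surj y
  obtain ⟨K, rfl⟩ := toD_surj z
  obtain ⟨f, hf⟩ := (le_iff _ _).1 h
  obtain ⟨g, hg⟩ := (le_iff _ _).1 h'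
  exact (le_iff _ _).2 ⟨f.trans g, fun u v => by simp [hf, hg]⟩

theorem nV_le {x y : D} (h : x ≤ y) : nVerts x ≤ nVerts y := by
  obtain ⟨G, rfl⟩ := toD_surj x
  obtain ⟨H, rfl⟩ := toD_surj y
  obtain ⟨f, hf⟩ := (le_iff _ _).1 h
  simpa [nV_toD] using Fintype.card_le_of_embedding f

theorem eq_of_le {x y : D} (h : x ≤ y) (hn : nVerts x = nVerts y) : x = y := by
  obtain ⟨G, rfl⟩ := toD_surj x
  obtain ⟨H, rfl⟩ := toD_surj y
  obtain ⟨f, hf⟩ := (le_iff _ _).1 h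
  rw [nV_toD, nV_toD] at hn
  have hb : Function.Bijective f := (Fintype.bijective_iff_injective_and_card f).2
    ⟨f.injective, by simpa using hn⟩
  exact Quotient.sound ⟨Equiv.ofBijective f hb, fun u v => hf u v⟩

theorem nV_pos (x : D) : 0 < nVerts x := by
  obtain ⟨G, rfl⟩ := toD_surj x
  exact G.pos

theorem exists_lower (x : D) (n : ℕ) (hn : 0 < n) (h : nVerts x = n + 1) :
    ∃ z, z ≤ x ∧ nVerts z = n := by
  obtain ⟨G, rfl⟩ := toD_surj x
  rw [nV_toD] at h
  have hle : n ≤ G.n := by omega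
  refine ⟨toD ⟨n, hn, fun u v => G.adj (Fin.castLE hle u) (Fin.castLE hle v)⟩, ?_, rfl⟩
  exact (le_iff _ _).2 ⟨⟨Fin.castLE hle, Fin.castLE_injective _⟩, fun _ _ => rfl⟩

/-- rank argument -/
theorem rank_mono {N : ℕ} (f : D → D) (hinj : ∀ x y, nVerts x ≤ N → nVerts y ≤ N → f x = f y → x = y)
    (hm : ∀ x y, nVerts y ≤ N → x ≤ y → f x ≤ f y) :
    ∀ n x, nVerts x ≤ N → nVerts x = n → n ≤ nVerts (f x) := by
  intro n
  induction n with
  | zero => intros; omega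
  | succ n ih =>
    intro x hx hn
    rcases Nat.eq_zero_or_pos n with h0 | h0
    · have := nV_pos (f x); omega
    obtain ⟨z, hz, hzn⟩ := exists_lower x n h0 hn
    have h1 := ih z (by omega) hzn
    have h2 := hm z x hx hz
    have h3 := nV_le h2
    by_contra hcon
    have h4 : f z = f x := eq_of_le h2 (by omega)
    have := hinj z x (by omega) hx h4
    subst this
    omega

structure Good (ψ : D → D) : Prop where
  nv : ∀ x, nVerts (ψ x) = nVerts x
  inj : Function.Injective ψ
  surj : Function.Surjective ψ
  ord : ∀ x y, nVerts y ≤ 4 → (x ≤ y ↔ ψ x ≤ ψ y)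

theorem Good.comp {ψ χ : D → D} (h : Good ψ) (h' : Good χ) : Good (ψ ∘ χ) where
  nv x := by simp [h.nv, h'.nv]
  inj := h.inj.comp h'.inj
  surj := h.surj.comp h'.surj
  ord x y hy := by
    rw [h'.ord x y hy, h.ord _ _ (by rw [h'.nv]; exact hy)]; rfl

theorem auto_nv {φ : D → D} (h : IsOrderAuto φ) (x : D) : nVerts (φ x) = nVerts x := by
  obtain ⟨hb, ho⟩ := h
  apply le_antisymm
  · let e := Equiv.ofBijective φ hb
    have he : ∀ x, φ (e.symm x) = x := fun x => e.apply_symm_apply x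
    have := rank_mono (N := nVerts (φ x)) e.symm (fun x y _ _ h => e.symm.injective h)
      (fun a b _ hab => by rw [ho, he, he]; exact hab) _ (φ x) (le_refl _) rfl
    have h2 : e.symm (φ x) = x := e.symm_apply_apply x
    rwa [h2] at this
  · exact rank_mono (N := nVerts x) φ (fun x y _ _ h => hb.1 h)
      (fun a b _ hab => (ho _ _).1 hab) _ x (le_refl _) rfl

theorem auto_good {φ : D → D} (h : IsOrderAuto φ) : Good φ :=
  ⟨auto_nv h, h.1.1, h.1.2, fun x y _ => h.2 x y⟩

/-- extension by the identity -/
noncomputable def ext4 (ψ : ↥(Dn 4) → ↥(Dn 4)) (x : D) : D :=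
  open Classical in if h : x ∈ Dn 4 then ψ ⟨x, h⟩ else x

theorem ext4_mem (ψ : ↥(Dn 4) → ↥(Dn 4)) (x : ↥(Dn 4)) : ext4 ψ x = ψ x := by
  simp [ext4]

theorem ext4_mem' (ψ : ↥(Dn 4) → ↥(Dn 4)) (x : D) (h : x ∈ Dn 4) : ext4 ψ x = ψ ⟨x, h⟩ := by
  simp [ext4, h]

theorem ext4_not (ψ : ↥(Dn 4) → ↥(Dn 4)) (x : D) (h : x ∉ Dn 4) : ext4 ψ x = x := by
  simp [ext4, h]

theorem ext4_mem_iff (ψ : ↥(Dn 4) → ↥(Dn 4)) (x : D) : ext4 ψ x ∈ Dn 4 ↔ x ∈ Dn 4 := by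
  by_cases h : x ∈ Dn 4
  · rw [ext4_mem' _ _ h]; simp [h]
  · rw [ext4_not _ _ h]

theorem ext4_left (ψ χ : ↥(Dn 4) → ↥(Dn 4)) (h : ∀ x, ψ (χ x) = x) (x : D) :
    ext4 ψ (ext4 χ x) = x := by
  by_cases hx : x ∈ Dn 4
  · rw [ext4_mem' _ _ hx, ext4_mem, h]
  · rw [ext4_not _ _ hx, ext4_not _ _ hx]

theorem ext4_mono (ψ : ↥(Dn 4) → ↥(Dn 4)) (h : ∀ x y : ↥(Dn 4), x ≤ y → ψ x ≤ ψ y) (x y : D)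
    (hy : nVerts y ≤ 4) (hxy : x ≤ y) : ext4 ψ x ≤ ext4 ψ y := by
  have hx : x ∈ Dn 4 := le_trans (nV_le hxy) hy
  have hy : y ∈ Dn 4 := hy
  rw [ext4_mem' _ _ hx, ext4_mem' _ _ hy]
  exact h ⟨x, hx⟩ ⟨y, hy⟩ hxy

theorem ext4_good {ψ : ↥(Dn 4) → ↥(Dn 4)} (h : IsOrderAuto ψ) : Good (ext4 ψ) := by
  obtain ⟨hb, ho⟩ := h
  let e := Equiv.ofBijective ψ hb
  have he : ∀ x, ψ (e.symm x) = x := fun x => e.apply_symm_apply x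
  have he' : ∀ x, e.symm (ψ x) = x := fun x => e.symm_apply_apply x
  have m1 := ext4_mono ψ (fun x y => (ho x y).1)
  have m2 := ext4_mono e.symm (fun x y hxy => by rw [ho, he, he]; exact hxy)
  have i1 := ext4_left ψ e.symm he
  have i2 := ext4_left e.symm ψ he'
  refine ⟨fun x => ?_, fun x y hxy => ?_, fun x => ⟨_, i1 x⟩, fun x y hy => ⟨m1 x y hy, fun hh => ?_⟩⟩
  · by_cases hx : x ∈ Dn 4
    · apply le_antisymm
      · have := rank_mono (N := 4) (ext4 e.symm) (fun a b _ _ hh => by rw [← i1 a, hh, i1])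
          m2 _ (ext4 ψ x) ((ext4_mem_iff ψ x).2 hx) rfl
        rwa [i2] at this
      · exact rank_mono (N := 4) (ext4 ψ) (fun a b _ _ hh => by rw [← i2 a, hh, i2])
          m1 _ x hx rfl
    · rw [ext4_not _ _ hx]
  · rw [← i2 x, hxy, i2]
  · have := m2 _ _ ((ext4_mem_iff ψ y).2 hy) hh
    rwa [i2, i2] at this

/-- restricting a good map to D4 -/
theorem good_restr {ψ : D → D} (h : Good ψ) :
    IsOrderAuto (fun x : ↥(Dn 4) => (⟨ψ x, by have := x.2; simp only [Dn, Set.mem_ofPred_eq, h.nv] at *; exact this⟩ : ↥(Dn 4))) := by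
  refine ⟨⟨fun x y hxy => ?_, fun y => ?_⟩, fun x y => h.ord x y y.2⟩
  · simp only [Subtype.mk.injEq] at hxy
    exact Subtype.ext (h.inj hxy)
  · obtain ⟨x, hx⟩ := h.surj y
    refine ⟨⟨x, ?_⟩, Subtype.ext hx⟩
    have := y.2
    rw [← hx] at this
    simpa only [Dn, Set.mem_ofPred_eq, h.nv] using this

/-! The explicit automorphisms. -/

def tr (t r : Bool → Bool) (π : Equiv.Perm (Bool × Bool)) (l m : Bool) (p : Bool × Bool) :
    Bool × Bool :=
  if l = m then
    (if p.1 = p.2 then (xor (t l) p.1, xor (t l) p.2) else if r l then p.swap else p)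
  else if l then π p else (π p.swap).swap

theorem tr_swap (t r : Bool → Bool) (π : Equiv.Perm (Bool × Bool)) (l m : Bool) (p : Bool × Bool) :
    tr t r π m l p.swap = (tr t r π l m p).swap := by
  rcases p with ⟨a, b⟩
  cases l <;> cases m <;> simp [tr] <;> cases a <;> cases b <;> simp <;> split_ifs <;> rfl

theorem tr_inv (t r : Bool → Bool) (π : Equiv.Perm (Bool × Bool)) (l m : Bool) (p : Bool × Bool) :
    tr t r π l m (tr t r π⁻¹ l m p) = p := by
  rcases p with ⟨a, b⟩
  cases l <;> cases m <;> simp [tr] <;> cases a <;> cases b <;> simp <;> split_ifs <;> simp_all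

theorem tr_inv' (t r : Bool → Bool) (π : Equiv.Perm (Bool × Bool)) (l m : Bool) (p : Bool × Bool) :
    tr t r π⁻¹ l m (tr t r π l m p) = p := by
  have := tr_inv t r π⁻¹ l m p
  rwa [inv_inv] at this

def ty {n : ℕ} (A : Fin n → Fin n → Bool) (u v : Fin n) : Bool × Bool := (A u v, A v u)

theorem ty_swap {n : ℕ} (A : Fin n → Fin n → Bool) (u v : Fin n) : (ty A u v).swap = ty A v u := rfl

/-- general relabelling with loops sent to loops by `c` and types at loops shifted by `d` -/
def actA (c d : Bool) (t r : Bool → Bool) (π : Equiv.Perm (Bool × Bool)) {n : ℕ}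
    (A : Fin n → Fin n → Bool) : Fin n → Fin n → Bool :=
  fun u v => if u = v then xor c (A u u) else
    (tr t r π (xor d (A u u)) (xor d (A v v)) (ty A u v)).1

def actG (c d : Bool) (t r : Bool → Bool) (π : Equiv.Perm (Bool × Bool)) (G : FinDigraph) :
    FinDigraph := ⟨G.n, G.pos, actA c d t r π G.adj⟩

theorem actA_loop (c d t r π) {n : ℕ} (A : Fin n → Fin n → Bool) (u : Fin n) :
    actA c d t r π A u u = xor c (A u u) := by simp [actA]

theorem actA_ne (c d t r π) {n : ℕ} (A : Fin n → Fin n → Bool) (u v : Fin n) (h : u ≠ v) :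
    actA c d t r π A u v = (tr t r π (xor d (A u u)) (xor d (A v v)) (ty A u v)).1 := by
  simp [actA, h]

theorem actA_ty (c d t r π) {n : ℕ} (A : Fin n → Fin n → Bool) (u v : Fin n) (h : u ≠ v) :
    ty (actA c d t r π A) u v = tr t r π (xor d (A u u)) (xor d (A v v)) (ty A u v) := by
  have := tr_swap t r π (xor d (A u u)) (xor d (A v v)) (ty A u v)
  rw [ty_swap] at this
  rw [ty, actA_ne _ _ _ _ _ _ _ _ h, actA_ne _ _ _ _ _ _ _ _ h.symm, this]
  rfl

theorem adj_ext {n : ℕ} (A B : Fin n → Fin n → Bool)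
    (h1 : ∀ u, A u u = B u u) (h2 : ∀ u v, u ≠ v → ty A u v = ty B u v) : A = B := by
  funext u v
  by_cases huv : u = v
  · subst huv; exact h1 u
  · exact congrArg Prod.fst (h2 u v huv)

theorem actG_emb (c d t r π) {G H : FinDigraph} (h : Emb G H) :
    Emb (actG c d t r π G) (actG c d t r π H) := by
  obtain ⟨n, hn, A⟩ := G
  obtain ⟨m, hm, B⟩ := H
  obtain ⟨f, hf⟩ := h
  refine ⟨f, ?_⟩
  change ∀ u v : Fin n, actA c d t r π B (f u) (f v) = actA c d t r π A u v
  change ∀ u v : Fin n, B (f u) (f v) = A u v at hf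
  change Fin n ↪ Fin m at f
  intro u v
  have := f.injective.eq_iff (a := u) (b := v)
  simp only [actA, this, hf, ty]

theorem actA_inv (c t r π) {n : ℕ} (A : Fin n → Fin n → Bool) :
    actA c false t r π (actA c c t r π⁻¹ A) = A := by
  apply adj_ext
  · intro u
    rw [actA_loop, actA_loop]; cases c <;> simp
  · intro u v huv
    rw [actA_ty _ _ _ _ _ _ _ _ huv, actA_ty _ _ _ _ _ _ _ _ huv, actA_loop, actA_loop]
    simp only [Bool.false_xor]
    rw [tr_inv]

theorem actA_inv' (c t r π) {n : ℕ} (A : Fin n → Fin n → Bool) :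
    actA c c t r π⁻¹ (actA c false t r π A) = A := by
  apply adj_ext
  · intro u
    rw [actA_loop, actA_loop]; cases c <;> simp
  · intro u v huv
    rw [actA_ty _ _ _ _ _ _ _ _ huv, actA_ty _ _ _ _ _ _ _ _ huv, actA_loop, actA_loop]
    rw [← Bool.xor_assoc, ← Bool.xor_assoc, Bool.xor_self, Bool.false_xor, Bool.false_xor, tr_inv']

theorem actG_inv (c t r π) (G : FinDigraph) :
    actG c false t r π (actG c c t r π⁻¹ G) = G := by
  simp only [actG, actA_inv]

theorem actG_inv' (c t r π) (G : FinDigraph) :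
    actG c c t r π⁻¹ (actG c false t r π G) = G := by
  simp only [actG, actA_inv']

def actD (c d : Bool) (t r : Bool → Bool) (π : Equiv.Perm (Bool × Bool)) : D → D :=
  Quotient.lift (fun G => toD (actG c d t r π G)) (fun G H h => by
    apply eq_of_le
    · rw [le_iff]
      apply actG_emb
      obtain ⟨e, he⟩ := h
      exact ⟨e.toEmbedding, he⟩
    · obtain ⟨e, he⟩ := h
      show G.n = H.n
      simpa using Fintype.card_congr e)

theorem actD_toD (c d t r π) (G : FinDigraph) : actD c d t r π (toD G) = toD (actG c d t r π G) := rfl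

theorem actD_inv (c t r π) (x : D) : actD c false t r π (actD c c t r π⁻¹ x) = x := by
  obtain ⟨G, rfl⟩ := toD_surj x
  rw [actD_toD, actD_toD, actG_inv]

theorem actD_inv' (c t r π) (x : D) : actD c c t r π⁻¹ (actD c false t r π x) = x := by
  obtain ⟨G, rfl⟩ := toD_surj x
  rw [actD_toD, actD_toD, actG_inv']

theorem actD_mono (c d t r π) (x y : D) (h : x ≤ y) : actD c d t r π x ≤ actD c d t r π y := by
  obtain ⟨G, rfl⟩ := toD_surj x
  obtain ⟨H, rfl⟩ := toD_surj y
  rw [actD_toD, actD_toD, le_iff]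
  exact actG_emb _ _ _ _ _ ((le_iff _ _).1 h)

theorem actD_auto (c t r π) : IsOrderAuto (actD c false t r π) := by
  refine ⟨⟨fun x y h => ?_, fun x => ⟨_, actD_inv c t r π x⟩⟩, fun x y => ⟨actD_mono _ _ _ _ _ x y, fun h => ?_⟩⟩
  · rw [← actD_inv' c t r π x, h, actD_inv']
  · have := actD_mono c c t r π⁻¹ _ _ h
    rwa [actD_inv', actD_inv'] at this

abbrev z : Bool → Bool := fun _ => false

/-- composition needed later -/
theorem act_comp (c t π r) (x : D) :
    actD c false z z 1 (actD false false t z π (actD false false z r 1 x)) =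
      actD c false t r π x := by
  obtain ⟨G, rfl⟩ := toD_surj x
  simp only [actD_toD, actG]
  congr 2
  apply adj_ext
  · intro u
    simp [actA_loop]
  · intro u v huv
    simp only [actA_ty _ _ _ _ _ _ _ _ huv, actA_loop]
    simp only [Bool.false_xor]
    generalize G.adj u u = l
    generalize G.adj v v = m
    rcases ty G.adj u v with ⟨a, b⟩
    cases l <;> cases m <;> simp [tr] <;> cases a <;> cases b <;> simp <;> split_ifs <;> simp_all



/-! Small digraphs. -/

def V (l : Bool) : FinDigraph := ⟨1, by decide, ![![l]]⟩
def P (l m : Bool) (p : Bool × Bool) : FinDigraph := ⟨2, by decide, ![![l, p.1], ![p.2, m]]⟩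
def T3 (l0 l1 l2 : Bool) (p q r : Bool × Bool) : FinDigraph :=
  ⟨3, by decide, ![![l0, p.1, q.1], ![p.2, l1, r.1], ![q.2, r.2, l2]]⟩
/-- three vertices `1,2,3` plus a vertex `0` -/
def A4 (l0 l : Bool) (p1 p2 p3 a b c : Bool × Bool) : Fin 4 → Fin 4 → Bool :=
  ![![l0, p1.1, p2.1, p3.1], ![p1.2, l, a.1, b.1], ![p2.2, a.2, l, c.1], ![p3.2, b.2, c.2, l]]
def Q4 (l0 l : Bool) (p1 p2 p3 a b c : Bool × Bool) : FinDigraph :=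
  ⟨4, by decide, A4 l0 l p1 p2 p3 a b c⟩

def vD (l : Bool) : D := toD (V l)
def pD (l m : Bool) (p : Bool × Bool) : D := toD (P l m p)
def tD (l0 l1 l2 : Bool) (p q r : Bool × Bool) : D := toD (T3 l0 l1 l2 p q r)

theorem vD_n (l) : nVerts (vD l) = 1 := rfl
theorem pD_n (l m p) : nVerts (pD l m p) = 2 := rfl
theorem tD_n (l0 l1 l2 p q r) : nVerts (tD l0 l1 l2 p q r) = 3 := rfl

theorem le_iff' {m n : ℕ} (hm : 0 < m) (B : Fin m → Fin m → Bool) (hn : 0 < n)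
    (A : Fin n → Fin n → Bool) : toD ⟨m, hm, B⟩ ≤ toD ⟨n, hn, A⟩ ↔
      ∃ f : Fin m → Fin n, Function.Injective f ∧ ∀ u v, A (f u) (f v) = B u v := by
  rw [le_iff]
  exact ⟨fun ⟨f, hf⟩ => ⟨f, f.injective, hf⟩, fun ⟨f, h, hf⟩ => ⟨⟨f, h⟩, hf⟩⟩

theorem V_le (l : Bool) {n : ℕ} (hn : 0 < n) (A : Fin n → Fin n → Bool) :
    vD l ≤ toD ⟨n, hn, A⟩ ↔ ∃ u, A u u = l := by
  rw [vD, V, le_iff']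
  constructor
  · rintro ⟨f, -, hf⟩
    exact ⟨f 0, hf 0 0⟩
  · rintro ⟨u, hu⟩
    refine ⟨fun _ => u, fun a b _ => Subsingleton.elim a b, fun a b => ?_⟩
    fin_cases a; fin_cases b
    exact hu

theorem P_le (l m : Bool) (p : Bool × Bool) {n : ℕ} (hn : 0 < n) (A : Fin n → Fin n → Bool) :
    pD l m p ≤ toD ⟨n, hn, A⟩ ↔ ∃ u v, u ≠ v ∧ A u u = l ∧ A v v = m ∧ ty A u v = p := by
  rw [pD, P, le_iff']
  constructor
  · rintro ⟨f, hi, hf⟩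
    exact ⟨f 0, f 1, hi.ne (by decide), hf 0 0, hf 1 1, Prod.ext (hf 0 1) (hf 1 0)⟩
  · rintro ⟨u, v, huv, rfl, rfl, rfl⟩
    refine ⟨![u, v], fun a b hab => ?_, fun a b => ?_⟩
    · fin_cases a <;> fin_cases b <;> simp_all [eq_comm]
    · fin_cases a <;> fin_cases b <;> rfl

theorem T_le (l0 l1 l2 : Bool) (p q r : Bool × Bool) {n : ℕ} (hn : 0 < n)
    (A : Fin n → Fin n → Bool) :
    tD l0 l1 l2 p q r ≤ toD ⟨n, hn, A⟩ ↔ ∃ u v w, u ≠ v ∧ u ≠ w ∧ v ≠ w ∧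
      A u u = l0 ∧ A v v = l1 ∧ A w w = l2 ∧ ty A u v = p ∧ ty A u w = q ∧ ty A v w = r := by
  rw [tD, T3, le_iff']
  constructor
  · rintro ⟨f, hi, hf⟩
    exact ⟨f 0, f 1, f 2, hi.ne (by decide), hi.ne (by decide), hi.ne (by decide), hf 0 0, hf 1 1, hf 2 2,
      Prod.ext (hf 0 1) (hf 1 0), Prod.ext (hf 0 2) (hf 2 0), Prod.ext (hf 1 2) (hf 2 1)⟩
  · rintro ⟨u, v, w, huv, huw, hvw, rfl, rfl, rfl, rfl, rfl, rfl⟩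
    refine ⟨![u, v, w], fun a b hab => ?_, fun a b => ?_⟩
    · fin_cases a <;> fin_cases b <;> simp_all [eq_comm]
    · fin_cases a <;> fin_cases b <;> rfl

theorem class1 (x : D) (h : nVerts x = 1) : ∃ l, x = vD l := by
  obtain ⟨⟨n, hn, A⟩, rfl⟩ := toD_surj x
  change n = 1 at h
  subst h
  exact ⟨A 0 0, (eq_of_le ((V_le _ _ _).2 ⟨0, rfl⟩) rfl).symm⟩

theorem class2 (x : D) (h : nVerts x = 2) : ∃ l m p, x = pD l m p := by
  obtain ⟨⟨n, hn, A⟩, rfl⟩ := toD_surj x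
  change n = 2 at h
  subst h
  exact ⟨A 0 0, A 1 1, ty A 0 1,
    (eq_of_le ((P_le _ _ _ _ _).2 ⟨0, 1, by decide, rfl, rfl, rfl⟩) rfl).symm⟩

theorem class3 (x : D) (h : nVerts x = 3) : ∃ l0 l1 l2 p q r, x = tD l0 l1 l2 p q r := by
  obtain ⟨⟨n, hn, A⟩, rfl⟩ := toD_surj x
  change n = 3 at h
  subst h
  exact ⟨A 0 0, A 1 1, A 2 2, ty A 0 1, ty A 0 2, ty A 1 2,
    (eq_of_le ((T_le _ _ _ _ _ _ _ _).2 ⟨0, 1, 2, by decide, by decide, by decide,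
      rfl, rfl, rfl, rfl, rfl, rfl⟩) rfl).symm⟩

theorem pD_swap (l m p) : pD l m p = pD m l p.swap :=
  eq_of_le ((P_le _ _ _ _ _).2 ⟨1, 0, by decide, rfl, rfl, rfl⟩) rfl

theorem tD_swap12 (l0 l1 l2 p q r) : tD l0 l1 l2 p q r = tD l0 l2 l1 q p r.swap := by
  refine eq_of_le ?_ (by rw [tD_n, tD_n])
  have h := (T_le l0 l1 l2 p q r (by decide)
    ![![l0, q.1, p.1], ![q.2, l2, r.swap.1], ![p.2, r.swap.2, l1]]).2 ⟨0, 2, 1, by decide, by decide, by decide,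
      rfl, rfl, rfl, Prod.ext rfl rfl, Prod.ext rfl rfl, Prod.ext rfl rfl⟩
  exact h

theorem tD_swap01 (l0 l1 l2 p q r) : tD l0 l1 l2 p q r = tD l1 l0 l2 p.swap r q := by
  refine eq_of_le ?_ (by rw [tD_n, tD_n])
  have h := (T_le l0 l1 l2 p q r (by decide)
    ![![l1, p.swap.1, r.1], ![p.swap.2, l0, q.1], ![r.2, q.2, l2]]).2 ⟨1, 0, 2, by decide, by decide, by decide,
      rfl, rfl, rfl, Prod.ext rfl rfl, Prod.ext rfl rfl, Prod.ext rfl rfl⟩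
  exact h

theorem class3' (x : D) (h : nVerts x = 3) :
    ∃ l p q r, x = tD (!l) l l p q r ∨ x = tD l l l p q r := by
  obtain ⟨l0, l1, l2, p, q, r, rfl⟩ := class3 x h
  by_cases h12 : l1 = l2
  · subst h12
    by_cases h01 : l0 = l1
    · subst h01; exact ⟨l0, p, q, r, Or.inr rfl⟩
    · refine ⟨l1, p, q, r, Or.inl ?_⟩
      have : l0 = !l1 := by revert h01; cases l0 <;> cases l1 <;> simp
      rw [this]
  · by_cases h01 : l0 = l1
    · subst h01
      have : l2 = !l0 := by revert h12; cases l0 <;> cases l2 <;> simp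
      subst this
      exact ⟨l0, _, _, _, Or.inl ((tD_swap12 _ _ _ _ _ _).trans (tD_swap01 _ _ _ _ _ _))⟩
    · have h1 : l1 = !l0 := by revert h01; cases l0 <;> cases l1 <;> simp
      have h2 : l2 = l0 := by subst h1; revert h12; cases l0 <;> cases l2 <;> simp
      subst h1 h2
      exact ⟨_, _, _, _, Or.inl (tD_swap01 _ _ _ _ _ _)⟩

theorem V_le_P (k l m p) : vD k ≤ pD l m p ↔ l = k ∨ m = k := by
  rw [pD, P, V_le, Fin.exists_fin_two]
  rfl

theorem P_eq (l m p p') (h : pD l m p = pD l m p') : p = p' ∨ (l = m ∧ p.swap = p') := by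
  have h1 : pD l m p' ≤ pD l m p := by rw [h]; exact le_rfl' _
  obtain ⟨u, v, huv, h2, h3, h4⟩ := (P_le _ _ _ _ _).1 h1
  fin_cases u <;> fin_cases v
  · exact absurd rfl huv
  · exact Or.inl h4
  · exact Or.inr ⟨h3, h4⟩
  · exact absurd rfl huv

theorem V_le_T (k l p q r) (h : vD k ≤ tD l l l p q r) : k = l := by
  rw [tD, T3, V_le] at h
  obtain ⟨u, hu⟩ := h
  fin_cases u <;> exact hu.symm

theorem actD_V (c t r π l) : actD c false t r π (vD l) = vD (xor c l) := by
  rw [vD, actD_toD]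
  exact (eq_of_le ((V_le _ _ _).2 ⟨0, rfl⟩) rfl).symm

theorem actD_P (c t r π l m p) :
    actD c false t r π (pD l m p) = pD (xor c l) (xor c m) (tr t r π l m p) := by
  rw [pD, actD_toD, actG]
  refine (eq_of_le ((P_le _ _ _ _ _).2 ⟨(0 : Fin 2), (1 : Fin 2), by decide, rfl, rfl, ?_⟩) rfl).symm
  exact (actA_ty c false t r π (P l m p).adj (0 : Fin 2) (1 : Fin 2) Fin.zero_ne_one).trans
    (by rw [Bool.false_xor, Bool.false_xor]; rfl)

theorem actD_T (c t r π l0 l1 l2 p q s) :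
    actD c false t r π (tD l0 l1 l2 p q s) = tD (xor c l0) (xor c l1) (xor c l2)
      (tr t r π l0 l1 p) (tr t r π l0 l2 q) (tr t r π l1 l2 s) := by
  rw [tD, actD_toD]
  have h01 : (0 : Fin 3) ≠ 1 := by decide
  have h02 : (0 : Fin 3) ≠ 2 := by decide
  have h12 : (1 : Fin 3) ≠ 2 := by decide
  refine (eq_of_le ((T_le _ _ _ _ _ _ _ _).2 ⟨(0 : Fin 3), (1 : Fin 3), (2 : Fin 3),
    h01, h02, h12, rfl, rfl, rfl, ?_, ?_, ?_⟩) rfl).symm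
  · exact (actA_ty c false t r π (T3 l0 l1 l2 p q s).adj (0 : Fin 3) (1 : Fin 3) h01).trans
      (by rw [Bool.false_xor, Bool.false_xor]; rfl)
  · exact (actA_ty c false t r π (T3 l0 l1 l2 p q s).adj (0 : Fin 3) (2 : Fin 3) h02).trans
      (by rw [Bool.false_xor, Bool.false_xor]; rfl)
  · exact (actA_ty c false t r π (T3 l0 l1 l2 p q s).adj (1 : Fin 3) (2 : Fin 3) h12).trans
      (by rw [Bool.false_xor, Bool.false_xor]; rfl)

theorem V_ne (k l : Bool) (h : vD k = vD l) : k = l := by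
  have h2 : vD k ≤ vD l := by rw [h]; exact le_rfl' _
  obtain ⟨u, hu⟩ := (V_le _ _ _).1 h2
  fin_cases u
  exact hu.symm

/-! Step A -/

theorem stepA {ψ : D → D} (h : Good ψ) : ∃ c, ∀ l, ψ (vD l) = vD (xor c l) := by
  obtain ⟨a, ha⟩ := class1 _ (h.nv (vD false))
  obtain ⟨b, hb⟩ := class1 _ (h.nv (vD true))
  have hne : a ≠ b := by
    rintro rfl
    exact absurd (V_ne _ _ (h.inj (ha.trans hb.symm))) (by decide)
  refine ⟨a, fun l => ?_⟩
  cases l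
  · simpa using ha
  · rw [hb]; congr 1; revert hne; cases a <;> cases b <;> simp



theorem Good.fix {ψ : D → D} (h : Good ψ) {x y : D} (hx : ψ x = x) (hy : nVerts y ≤ 4) :
    x ≤ ψ y ↔ x ≤ y := by
  rw [h.ord x y hy, hx]

/-! Step B -/

theorem B1 {ψ : D → D} (h : Good ψ) (hv : ∀ l, ψ (vD l) = vD l) (l m p) :
    ∃ p', ψ (pD l m p) = pD l m p' := by
  obtain ⟨l', m', p', e⟩ := class2 _ (h.nv (pD l m p))
  have key : ∀ k, (l' = k ∨ m' = k) ↔ (l = k ∨ m = k) := fun k => by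
    rw [← V_le_P k l' m' p', ← V_le_P k l m p, ← e]
    exact h.fix (hv k) (by rw [pD_n]; omega)
  have k1 := key true
  have k2 := key false
  have : (l' = l ∧ m' = m) ∨ (l' = m ∧ m' = l) := by
    revert k1 k2; clear * -; revert l m l' m'; decide
  rcases this with ⟨rfl, rfl⟩ | ⟨rfl, rfl⟩
  · exact ⟨p', e⟩
  · exact ⟨p'.swap, e.trans (pD_swap _ _ _)⟩

theorem PT (l' m' p' l p q r) (h : pD l' m' p' ≤ tD l l l p q r) :
    l' = l ∧ m' = l ∧ (p' = p ∨ p' = q ∨ p' = r ∨ p' = p.swap ∨ p' = q.swap ∨ p' = r.swap) := by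
  obtain ⟨u, v, huv, h1, h2, h3⟩ := (P_le _ _ _ _ _).1 h
  refine ⟨?_, ?_, ?_⟩
  · subst h1; fin_cases u <;> rfl
  · subst h2; fin_cases v <;> rfl
  · subst h3
    clear h h1 h2
    fin_cases u <;> fin_cases v <;> first | exact absurd rfl huv | skip
    · exact Or.inl rfl
    · exact Or.inr (Or.inl rfl)
    · exact Or.inr (Or.inr (Or.inr (Or.inl rfl)))
    · exact Or.inr (Or.inr (Or.inl rfl))
    · exact Or.inr (Or.inr (Or.inr (Or.inr (Or.inl rfl))))
    · exact Or.inr (Or.inr (Or.inr (Or.inr (Or.inr rfl))))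

abbrev pp : Bool × Bool := (true, false)
abbrev qq : Bool × Bool := (false, true)

theorem PT1 (l' m' p' l p q r) (hp : p.1 ≠ p.2) (hq : q.1 ≠ q.2) (hr : r.1 ≠ r.2)
    (h : pD l' m' p' ≤ tD l l l p q r) : l' = l ∧ m' = l ∧ p'.1 ≠ p'.2 := by
  obtain ⟨h1, h2, h3⟩ := PT _ _ _ _ _ _ _ h
  refine ⟨h1, h2, ?_⟩
  rcases h3 with rfl | rfl | rfl | rfl | rfl | rfl
  exacts [hp, hq, hr, hp.symm, hq.symm, hr.symm]

theorem single_cases (p : Bool × Bool) (h : p.1 ≠ p.2) : p = pp ∨ p = qq := by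
  revert p; decide

theorem pD_single (l p) (h : p.1 ≠ p.2) : pD l l p = pD l l pp := by
  rcases single_cases p h with rfl | rfl
  · rfl
  · exact pD_swap _ _ _

def Tr (l : Bool) : D := tD l l l pp pp pp
def Cy (l : Bool) : D := tD l l l pp qq pp

theorem loops {ψ : D → D} (h : Good ψ) (hv : ∀ l, ψ (vD l) = vD l) {y : D} (hy : nVerts y ≤ 4)
    {n : ℕ} {hn : 0 < n} {A : Fin n → Fin n → Bool} (e : ψ y = toD ⟨n, hn, A⟩) (l : Bool)
    (hl : ∀ k, vD k ≤ y → k = l) (u : Fin n) : A u u = l := by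
  apply hl
  rw [← h.fix (hv _) hy, e, V_le]
  exact ⟨u, rfl⟩

theorem cyc_perm (l : Bool) (e1 e2 e3 : Bool)
    (h : tD l l l (if e1 then pp.swap else pp) (if e2 then qq.swap else qq)
      (if e3 then pp.swap else pp) = Cy l) : e1 = e2 ∧ e2 = e3 := by
  have h1 : Cy l ≤ tD l l l (if e1 then pp.swap else pp) (if e2 then qq.swap else qq)
      (if e3 then pp.swap else pp) := by rw [h]; exact le_rfl' _
  obtain ⟨u, v, w, huv, huw, hvw, -, -, -, h4, h5, h6⟩ := (T_le _ _ _ _ _ _ _ _).1 h1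
  clear h h1
  revert e1 e2 e3 u v w l
  decide

theorem Tr_ne_Cy (l : Bool) : Tr l ≠ Cy l := by
  intro h
  have := cyc_perm l false true false h
  simp at this

theorem tourn3 (l p q r) (hp : p.1 ≠ p.2) (hq : q.1 ≠ q.2) (hr : r.1 ≠ r.2) :
    tD l l l p q r = Tr l ∨ tD l l l p q r = Cy l := by
  have s1 := tD_swap12 l l l
  have s2 := tD_swap01 l l l
  rcases single_cases p hp with rfl | rfl <;> rcases single_cases q hq with rfl | rfl <;>
    rcases single_cases r hr with rfl | rfl
  · exact Or.inl rfl
  · exact Or.inl (s1 _ _ _)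
  · exact Or.inr rfl
  · exact Or.inl ((s1 _ _ _).trans (s2 _ _ _))
  · exact Or.inl (s2 _ _ _)
  · exact Or.inr (s1 _ _ _)
  · exact Or.inl ((s2 _ _ _).trans (s1 _ _ _))
  · exact Or.inl ((s1 _ _ _).trans ((s2 _ _ _).trans (s1 _ _ _)))

theorem n3 {x : D} (hx : nVerts x = 3) : ∃ A : Fin 3 → Fin 3 → Bool,
    x = toD ⟨3, by decide, A⟩ ∧ x = tD (A 0 0) (A 1 1) (A 2 2) (ty A 0 1) (ty A 0 2) (ty A 1 2) := by
  obtain ⟨⟨n, hn, A⟩, rfl⟩ := toD_surj x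
  change n = 3 at hx
  subst hx
  exact ⟨A, rfl, (eq_of_le ((T_le _ _ _ _ _ _ _ _).2 ⟨0, 1, 2, by decide, by decide, by decide,
      rfl, rfl, rfl, rfl, rfl, rfl⟩) rfl).symm⟩

theorem n4 {x : D} (hx : nVerts x = 4) : ∃ A : Fin 4 → Fin 4 → Bool,
    x = toD ⟨4, by decide, A⟩ := by
  obtain ⟨⟨n, hn, A⟩, rfl⟩ := toD_surj x
  change n = 4 at hx
  subst hx
  exact ⟨A, rfl⟩

theorem B2a {ψ : D → D} (h : Good ψ) (hv : ∀ l, ψ (vD l) = vD l) (l a)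
    (hS : ψ (pD l l pp) = pD l l (a, a)) (p q r) (hp : p.1 ≠ p.2) (hq : q.1 ≠ q.2) (hr : r.1 ≠ r.2) :
    ψ (tD l l l p q r) = tD l l l (a, a) (a, a) (a, a) := by
  have hy : nVerts (tD l l l p q r) ≤ 4 := by rw [tD_n]; omega
  obtain ⟨A, e, e'⟩ := n3 ((h.nv (tD l l l p q r)).trans (tD_n _ _ _ _ _ _))
  have hl := loops h hv hy e l (fun k hk => V_le_T _ _ _ _ _ hk)
  have ht : ∀ u v, u ≠ v → ty A u v = (a, a) := by
    intro u v huv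
    have h1 : pD l l (ty A u v) ≤ ψ (tD l l l p q r) := by
      rw [e, P_le]; exact ⟨u, v, huv, hl u, hl v, rfl⟩
    obtain ⟨x, hx⟩ := h.surj (pD l l (ty A u v))
    have hxn : nVerts x = 2 := by rw [← h.nv, hx, pD_n]
    obtain ⟨l', m', p', rfl⟩ := class2 x hxn
    rw [← hx, ← h.ord _ _ hy] at h1
    obtain ⟨rfl, rfl, h2⟩ := PT1 _ _ _ _ _ _ _ hp hq hr h1
    rw [pD_single _ _ h2, hS] at hx
    rcases P_eq _ _ _ _ hx with h3 | ⟨-, h3⟩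
    · exact h3.symm
    · exact h3.symm
  rw [e', hl, hl, hl, ht _ _ (by decide), ht _ _ (by decide), ht _ _ (by decide)]

theorem B2 {ψ : D → D} (h : Good ψ) (hv : ∀ l, ψ (vD l) = vD l) (l) :
    ψ (pD l l pp) = pD l l pp := by
  obtain ⟨p', e⟩ := B1 h hv l l pp
  by_cases hp : p'.1 ≠ p'.2
  · rw [e, pD_single _ _ hp]
  · push Not at hp
    have hp' : p' = (p'.1, p'.1) := Prod.ext rfl hp.symm
    rw [hp'] at e
    have h1 := B2a h hv l _ e pp pp pp (by decide) (by decide) (by decide)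
    have h2 := B2a h hv l _ e pp qq pp (by decide) (by decide) (by decide)
    exact absurd (h.inj (h1.trans h2.symm)) (Tr_ne_Cy l)

theorem B3 {ψ : D → D} (h : Good ψ) (hv : ∀ l, ψ (vD l) = vD l) (l) (a : Bool) :
    ∃ b, ψ (pD l l (a, a)) = pD l l (b, b) := by
  obtain ⟨p', e⟩ := B1 h hv l l (a, a)
  by_cases hp : p'.1 ≠ p'.2
  · rw [pD_single _ _ hp, ← B2 h hv l] at e
    have := P_eq _ _ _ _ (h.inj e)
    revert this; cases a <;> simp [pp]
  · push Not at hp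
    have hp' : p' = (p'.1, p'.1) := Prod.ext rfl hp.symm
    exact ⟨p'.1, by rw [e, ← hp']⟩

theorem B4 {ψ : D → D} (h : Good ψ) (hv : ∀ l, ψ (vD l) = vD l) (l) :
    ∃ b, ∀ a, ψ (pD l l (a, a)) = pD l l (xor b a, xor b a) := by
  obtain ⟨b, hb⟩ := B3 h hv l false
  obtain ⟨c, hc⟩ := B3 h hv l true
  have hne : b ≠ c := by
    rintro rfl
    have := P_eq _ _ _ _ (h.inj (hb.trans hc.symm))
    simp at this
  refine ⟨b, fun a => ?_⟩
  cases a
  · simpa using hb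
  · rw [hc]; revert hne; cases b <;> cases c <;> simp

theorem stepB {ψ : D → D} (h : Good ψ) (hv : ∀ l, ψ (vD l) = vD l) :
    ∃ t π, ∀ x, nVerts x ≤ 2 → ψ x = actD false false t z π x := by
  choose f hf using B1 h hv true false
  have hinj : Function.Injective f := by
    intro p p' hpp
    have h1 := h.inj ((hf p).trans (by rw [hpp, hf p']))
    rcases P_eq _ _ _ _ h1 with h2 | ⟨h2, -⟩
    · exact h2
    · exact absurd h2 (by decide)
  choose t ht using B4 h hv
  refine ⟨t, Equiv.ofBijective f (Finite.injective_iff_bijective.1 hinj), fun x hx => ?_⟩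
  have hx0 := nV_pos x
  obtain hx1 | hx2 : nVerts x = 1 ∨ nVerts x = 2 := by omega
  · obtain ⟨l, rfl⟩ := class1 x hx1
    rw [hv, actD_V, Bool.false_xor]
  · obtain ⟨l, m, p, rfl⟩ := class2 x hx2
    rw [actD_P, Bool.false_xor, Bool.false_xor]
    by_cases hlm : l = m
    · subst hlm
      by_cases hp : p.1 = p.2
      · obtain ⟨a, b⟩ := p
        simp only at hp
        subst hp
        rw [ht]; simp [tr]
      · simp only [tr, hp, if_true, if_false]
        rw [pD_single _ _ hp, B2 h hv, if_neg (by simp), pD_single _ _ hp]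
    · cases l <;> cases m <;> simp at hlm
      · rw [pD_swap, hf, pD_swap]; simp [tr]
      · rw [hf]; simp [tr]

/-! Step C -/

theorem C1a {ψ : D → D} (h : Good ψ) (hf : ∀ x, nVerts x ≤ 2 → ψ x = x) (l p q r)
    (hp : p.1 ≠ p.2) (hq : q.1 ≠ q.2) (hr : r.1 ≠ r.2) :
    ψ (tD l l l p q r) = Tr l ∨ ψ (tD l l l p q r) = Cy l := by
  have hv : ∀ l, ψ (vD l) = vD l := fun l => hf _ (by rw [vD_n]; omega)
  have hy : nVerts (tD l l l p q r) ≤ 4 := by rw [tD_n]; omega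
  obtain ⟨A, e, e'⟩ := n3 ((h.nv (tD l l l p q r)).trans (tD_n _ _ _ _ _ _))
  have hl := loops h hv hy e l (fun k hk => V_le_T _ _ _ _ _ hk)
  have ht : ∀ u v, u ≠ v → (ty A u v).1 ≠ (ty A u v).2 := by
    intro u v huv
    have h1 : pD l l (ty A u v) ≤ ψ (tD l l l p q r) := by
      rw [e, P_le]; exact ⟨u, v, huv, hl u, hl v, rfl⟩
    rw [h.fix (hf _ (by rw [pD_n])) hy] at h1
    exact (PT1 _ _ _ _ _ _ _ hp hq hr h1).2.2
  rw [e', hl, hl, hl]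
  exact tourn3 l _ _ _ (ht _ _ (by decide)) (ht _ _ (by decide)) (ht _ _ (by decide))


theorem Tr_le {n : ℕ} {hn : 0 < n} {A : Fin n → Fin n → Bool} {l : Bool} (hl : ∀ u, A u u = l)
    (ht : ∀ u v, u ≠ v → (ty A u v).1 ≠ (ty A u v).2) (x u v : Fin n) (hu : x ≠ u) (hv : x ≠ v)
    (huv : u ≠ v) (he : ty A x u = ty A x v) : Tr l ≤ toD ⟨n, hn, A⟩ := by
  rw [Tr, T_le]
  rcases single_cases _ (ht x u hu) with h1 | h1 <;> rcases single_cases _ (ht u v huv) with h2 | h2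
  · exact ⟨x, u, v, hu, hv, huv, hl _, hl _, hl _, h1, he ▸ h1, h2⟩
  · exact ⟨x, v, u, hv, hu, huv.symm, hl _, hl _, hl _, he ▸ h1, h1, by rw [← ty_swap, h2]; rfl⟩
  · exact ⟨u, v, x, huv, hu.symm, hv.symm, hl _, hl _, hl _, h2, by rw [← ty_swap, h1]; rfl,
      by rw [← ty_swap, ← he, h1]; rfl⟩
  · exact ⟨v, u, x, huv.symm, hv.symm, hu.symm, hl _, hl _, hl _, by rw [← ty_swap, h2]; rfl,
      by rw [← ty_swap, ← he, h1]; rfl, by rw [← ty_swap, h1]; rfl⟩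

theorem tourn4 {hn : 0 < 4} {A : Fin 4 → Fin 4 → Bool} {l : Bool} (hl : ∀ u, A u u = l)
    (ht : ∀ u v, u ≠ v → (ty A u v).1 ≠ (ty A u v).2) : Tr l ≤ toD ⟨4, hn, A⟩ := by
  by_cases h1 : ty A 0 1 = ty A 0 2
  · exact Tr_le hl ht 0 1 2 (by decide) (by decide) (by decide) h1
  by_cases h2 : ty A 0 1 = ty A 0 3
  · exact Tr_le hl ht 0 1 3 (by decide) (by decide) (by decide) h2
  refine Tr_le hl ht 0 2 3 (by decide) (by decide) (by decide) ?_
  have a1 := ht 0 1 (by decide)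
  have a2 := ht 0 2 (by decide)
  have a3 := ht 0 3 (by decide)
  revert h1 h2 a1 a2 a3
  generalize ty A 0 1 = a
  generalize ty A 0 2 = b
  generalize ty A 0 3 = c
  revert a b c; decide

def TT (l : Bool) : D := toD (Q4 l l pp pp pp pp pp pp)

theorem TT_V (k l) (h : vD k ≤ TT l) : k = l := by
  obtain ⟨u, hu⟩ := (V_le _ _ _).1 h
  subst hu
  fin_cases u <;> rfl

theorem A4_diag (l0 l p1 p2 p3 a b c) (u : Fin 4) :
    A4 l0 l p1 p2 p3 a b c u u = if u = 0 then l0 else l := by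
  fin_cases u <;> rfl

theorem TT_ty (l : Bool) (u v : Fin 4) (huv : u ≠ v) :
    ty (A4 l l pp pp pp pp pp pp) u v = if u < v then pp else qq := by
  fin_cases u <;> fin_cases v <;> first | exact absurd rfl huv | rfl

theorem TT_P (k m l p) (h : pD k m p ≤ TT l) : p.1 ≠ p.2 := by
  obtain ⟨u, v, huv, -, -, h3⟩ := (P_le _ _ _ _ _).1 h
  have := h3.symm.trans (TT_ty l u v huv)
  rw [this]; split_ifs <;> decide

theorem TT_C (l) : ¬ Cy l ≤ TT l := by
  intro h
  obtain ⟨u, v, w, huv, huw, hvw, -, -, -, h4, h5, h6⟩ := (T_le _ _ _ _ _ _ _ _).1 h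
  have h4' := h4.symm.trans (TT_ty l u v huv)
  have h5' := h5.symm.trans (TT_ty l u w huw)
  have h6' := h6.symm.trans (TT_ty l v w hvw)
  have q1 : u < v := by
    by_contra hh; rw [if_neg hh] at h4'; exact absurd h4' (by decide)
  have q3 : v < w := by
    by_contra hh; rw [if_neg hh] at h6'; exact absurd h6' (by decide)
  rw [if_pos (lt_trans q1 q3)] at h5'
  exact absurd h5' (by decide)

theorem C1 {ψ : D → D} (h : Good ψ) (hf : ∀ x, nVerts x ≤ 2 → ψ x = x) (l) :
    ψ (Cy l) = Cy l := by
  have hv : ∀ l, ψ (vD l) = vD l := fun l => hf _ (by rw [vD_n]; omega)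
  rcases C1a h hf l pp qq pp (by decide) (by decide) (by decide) with h1 | h1
  swap
  · exact h1
  exfalso
  have hy : nVerts (TT l) ≤ 4 := le_refl 4
  obtain ⟨A, e⟩ := n4 (h.nv (TT l))
  have hl := loops h hv hy e l (fun k hk => TT_V _ _ hk)
  have ht : ∀ u v, u ≠ v → (ty A u v).1 ≠ (ty A u v).2 := by
    intro u v huv
    have h1 : pD l l (ty A u v) ≤ ψ (TT l) := by
      rw [e, P_le]; exact ⟨u, v, huv, hl u, hl v, rfl⟩
    rw [h.fix (hf _ (by rw [pD_n])) hy] at h1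
    exact TT_P _ _ _ _ h1
  have h2 : Tr l ≤ ψ (TT l) := by rw [e]; exact tourn4 hl ht
  change ψ (Cy l) = Tr l at h1
  rw [← h1, ← h.ord _ _ hy] at h2
  exact TT_C l h2

theorem M_V (l p q s) : vD (!l) ≤ tD (!l) l l p q s :=
  (V_le _ _ _).2 ⟨(0 : Fin 3), rfl⟩

theorem bne {l : Bool} (h : l = !l) : False := by cases l <;> simp at h

theorem M_P (l p q s p') : pD (!l) l p' ≤ tD (!l) l l p q s ↔ p' = p ∨ p' = q := by
  constructor
  · intro h
    obtain ⟨u, v, huv, h1, h2, h3⟩ := (P_le _ _ _ _ _).1 h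
    subst h3
    clear h
    fin_cases u
    · fin_cases v
      · exact absurd rfl huv
      · exact Or.inl rfl
      · exact Or.inr rfl
    · exact (bne h1).elim
    · exact (bne h1).elim
  · rintro (rfl | rfl)
    · exact (P_le _ _ _ _ _).2 ⟨(0 : Fin 3), (1 : Fin 3), Fin.zero_ne_one, rfl, rfl, rfl⟩
    · exact (P_le _ _ _ _ _).2 ⟨(0 : Fin 3), (2 : Fin 3), by decide +revert, rfl, rfl, rfl⟩

theorem M_Q (l p q s) : pD l l s ≤ tD (!l) l l p q s :=
  (P_le _ _ _ _ _).2 ⟨(1 : Fin 3), (2 : Fin 3), by decide +revert, rfl, rfl, rfl⟩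

theorem M_inj (l p q s s') (hpq : p ≠ q) (h : tD (!l) l l p q s = tD (!l) l l p q s') : s = s' := by
  have h1 : tD (!l) l l p q s ≤ tD (!l) l l p q s' := by rw [h]; exact le_rfl' _
  obtain ⟨u, v, w, huv, huw, hvw, h1, h2, h3, h4, h5, h6⟩ := (T_le _ _ _ _ _ _ _ _).1 h1
  clear h
  fin_cases u
  · fin_cases v
    · exact absurd rfl huv
    · fin_cases w
      · exact absurd rfl huw
      · exact absurd rfl hvw
      · exact h6.symm
    · exact absurd h4.symm hpq
  · exact (bne h1).elim
  · exact (bne h1).elim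

theorem C2 {ψ : D → D} (h : Good ψ) (hf : ∀ x, nVerts x ≤ 2 → ψ x = x) (l p q s) :
    ψ (tD (!l) l l p q s) = tD (!l) l l p q s ∨ ψ (tD (!l) l l p q s) = tD (!l) l l p q s.swap := by
  have hy : nVerts (tD (!l) l l p q s) ≤ 4 := by rw [tD_n]; omega
  obtain ⟨A, e, -⟩ := n3 ((h.nv (tD (!l) l l p q s)).trans (tD_n _ _ _ _ _ _))
  have hV := (h.fix (hf _ (by rw [vD_n]; omega)) hy).2 (M_V l p q s)
  have hQ := (h.fix (hf _ (by rw [pD_n])) hy).2 (M_Q l p q s)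
  rw [e, V_le] at hV
  rw [e, P_le] at hQ
  obtain ⟨w, hw⟩ := hV
  obtain ⟨u, v, huv, hu, hv, hs⟩ := hQ
  have hwu : w ≠ u := by rintro rfl; exact bne (hu.symm.trans hw)
  have hwv : w ≠ v := by rintro rfl; exact bne (hv.symm.trans hw)
  have e2 : ψ (tD (!l) l l p q s) = tD (!l) l l (ty A w u) (ty A w v) s := by
    refine (eq_of_le ?_ (by rw [h.nv]; rfl)).symm
    rw [e, T_le]
    exact ⟨w, u, v, hwu, hwv, huv, hw, hu, hv, rfl, rfl, hs⟩
  have hP : ∀ p', (p' = ty A w u ∨ p' = ty A w v) ↔ (p' = p ∨ p' = q) := by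
    intro p'
    rw [← M_P l _ _ s, ← M_P l p q s, ← e2]
    exact h.fix (hf _ (by rw [pD_n])) hy
  rw [e2]
  revert hP
  generalize ty A w u = p1
  generalize ty A w v = q1
  intro hP
  have : (p1 = p ∧ q1 = q) ∨ (p1 = q ∧ q1 = p) := by
    have a1 := hP p
    have a2 := hP q
    have a3 := hP p1
    have a4 := hP q1
    clear * - a1 a2 a3 a4
    grind
  rcases this with ⟨rfl, rfl⟩ | ⟨rfl, rfl⟩
  · exact Or.inl rfl
  · exact Or.inr (tD_swap12 _ _ _ _ _ _)


theorem Q_L (l0 l p1 p2 p3 a b c) : tD l l l a b c ≤ toD (Q4 l0 l p1 p2 p3 a b c) := by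
  have h := (T_le l l l a b c (by decide) (A4 l0 l p1 p2 p3 a b c)).2 ⟨1, 2, 3, by decide, by decide,
    by decide, rfl, rfl, rfl, Prod.ext rfl rfl, Prod.ext rfl rfl, Prod.ext rfl rfl⟩
  exact h

theorem Q_12 (l0 l p1 p2 p3 a b c) : tD l0 l l p1 p2 a ≤ toD (Q4 l0 l p1 p2 p3 a b c) := by
  have h := (T_le l0 l l p1 p2 a (by decide) (A4 l0 l p1 p2 p3 a b c)).2 ⟨0, 1, 2, by decide, by decide,
    by decide, rfl, rfl, rfl, Prod.ext rfl rfl, Prod.ext rfl rfl, Prod.ext rfl rfl⟩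
  exact h

theorem Q_13 (l0 l p1 p2 p3 a b c) : tD l0 l l p1 p3 b ≤ toD (Q4 l0 l p1 p2 p3 a b c) := by
  have h := (T_le l0 l l p1 p3 b (by decide) (A4 l0 l p1 p2 p3 a b c)).2 ⟨0, 1, 3, by decide, by decide,
    by decide, rfl, rfl, rfl, Prod.ext rfl rfl, Prod.ext rfl rfl, Prod.ext rfl rfl⟩
  exact h

theorem Q_23 (l0 l p1 p2 p3 a b c) : tD l0 l l p2 p3 c ≤ toD (Q4 l0 l p1 p2 p3 a b c) := by
  have h := (T_le l0 l l p2 p3 c (by decide) (A4 l0 l p1 p2 p3 a b c)).2 ⟨0, 2, 3, by decide, by decide,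
    by decide, rfl, rfl, rfl, Prod.ext rfl rfl, Prod.ext rfl rfl, Prod.ext rfl rfl⟩
  exact h

theorem fin4 (w s1 s2 s3 : Fin 4) (h1 : w ≠ s1) (h2 : w ≠ s2) (h3 : w ≠ s3) (h4 : s1 ≠ s2)
    (h5 : s1 ≠ s3) (h6 : s2 ≠ s3) (v : Fin 4) : v = w ∨ v = s1 ∨ v = s2 ∨ v = s3 := by
  omega

theorem C3 {ψ : D → D} (h : Good ψ) (hf : ∀ x, nVerts x ≤ 2 → ψ x = x) (l p1 p2 p3)
    (h12 : p1 ≠ p2) (h13 : p1 ≠ p3) (h23 : p2 ≠ p3) (a b c a' b' c')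
    (ha : ψ (tD (!l) l l p1 p2 a) = tD (!l) l l p1 p2 a')
    (hb : ψ (tD (!l) l l p1 p3 b) = tD (!l) l l p1 p3 b')
    (hc : ψ (tD (!l) l l p2 p3 c) = tD (!l) l l p2 p3 c') :
    ψ (tD l l l a b c) = tD l l l a' b' c' := by
  have hv : ∀ l, ψ (vD l) = vD l := fun l => hf _ (by rw [vD_n]; omega)
  have hy : nVerts (toD (Q4 (!l) l p1 p2 p3 a b c)) ≤ 4 := le_refl 4
  obtain ⟨A, e⟩ := n4 (h.nv (toD (Q4 (!l) l p1 p2 p3 a b c)))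
  -- the three vertices with loop status `l`
  obtain ⟨B, eB, eB'⟩ := n3 ((h.nv (tD l l l a b c)).trans (tD_n _ _ _ _ _ _))
  have hl := loops h hv (by rw [tD_n]; omega) eB l (fun k hk => V_le_T _ _ _ _ _ hk)
  rw [hl, hl, hl] at eB'
  have hL := (h.ord _ _ hy).1 (Q_L (!l) l p1 p2 p3 a b c)
  rw [e, eB', T_le] at hL
  have e12 := (h.ord _ _ hy).1 (Q_12 (!l) l p1 p2 p3 a b c)
  have e13 := (h.ord _ _ hy).1 (Q_13 (!l) l p1 p2 p3 a b c)
  have e23 := (h.ord _ _ hy).1 (Q_23 (!l) l p1 p2 p3 a b c)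
  rw [ha, e, T_le] at e12
  rw [hb, e, T_le] at e13
  rw [hc, e, T_le] at e23
  rw [eB']
  clear ha hb hc e eB eB' hl hy
  obtain ⟨s1, s2, s3, hs12, hs13, hs23, hs1, hs2, hs3, k12, k13, k23⟩ := hL
  obtain ⟨w, u1, u2, g1, g2, g3, hw, hu1, hu2, t1, t2, m12⟩ := e12
  obtain ⟨w', v1, u3, g1', g2', g3', hw', hv1, hu3, t1', t3, m13⟩ := e13
  obtain ⟨w'', v2, v3, g1'', g2'', g3'', hw'', hv2, hv3, t2', t3', m23⟩ := e23
  have ne : ∀ {x y}, A x x = (!l) → A y y = l → x ≠ y := by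
    rintro x y hx hy rfl; exact bne (hy.symm.trans hx)
  have uniq : ∀ x, A x x = (!l) → x = w := by
    intro x hx
    rcases fin4 w s1 s2 s3 (ne hw hs1) (ne hw hs2) (ne hw hs3) hs12 hs13 hs23 x with r | r | r | r
    · exact r
    · exact absurd r (ne hx hs1)
    · exact absurd r (ne hx hs2)
    · exact absurd r (ne hx hs3)
  obtain rfl := uniq w' hw'
  obtain rfl := uniq w'' hw''
  have ht : ∀ {x y p q}, ty A w'' x = p → ty A w'' y = q → p ≠ q → x ≠ y := by
    rintro x y p q hx hy hpq rfl; exact hpq (hx.symm.trans hy)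
  have cover := fin4 w'' u1 u2 u3 g1 g2 g2' (ht t1 t2 h12) (ht t1 t3 h13) (ht t2 t3 h23)
  have hv1u : v1 = u1 := by
    rcases cover v1 with r | r | r | r
    · exact absurd r.symm g1'
    · exact r
    · exact absurd r (ht t1' t2 h12)
    · exact absurd r (ht t1' t3 h13)
  have hv2u : v2 = u2 := by
    rcases cover v2 with r | r | r | r
    · exact absurd r.symm g1''
    · exact absurd r (ht t2' t1 h12.symm)
    · exact r
    · exact absurd r (ht t2' t3 h23)
  have hv3u : v3 = u3 := by
    rcases cover v3 with r | r | r | r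
    · exact absurd r.symm g2''
    · exact absurd r (ht t3' t1 h13.symm)
    · exact absurd r (ht t3' t2 h23.symm)
    · exact r
  subst hv1u hv2u hv3u
  let u : Fin 3 → Fin 4 := ![v1, v2, v3]
  have hcov : ∀ x, A x x = l → ∃ j, u j = x := by
    intro x hx
    rcases cover x with r | r | r | r
    · exact absurd r.symm (ne hw hx)
    · exact ⟨0, r.symm⟩
    · exact ⟨1, r.symm⟩
    · exact ⟨2, r.symm⟩
  obtain ⟨j1, hj1⟩ := hcov s1 hs1
  obtain ⟨j2, hj2⟩ := hcov s2 hs2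
  obtain ⟨j3, hj3⟩ := hcov s3 hs3
  have E1 : tD l l l a' b' c' = toD ⟨3, by decide, fun i j => A (u i) (u j)⟩ :=
    eq_of_le ((T_le _ _ _ _ _ _ _ _).2 ⟨0, 1, 2, by decide, by decide, by decide,
      hu1, hu2, hu3, m12, m13, m23⟩) rfl
  have E2 : tD l l l (ty B 0 1) (ty B 0 2) (ty B 1 2) = toD ⟨3, by decide, fun i j => A (u i) (u j)⟩ := by
    subst hj1 hj2 hj3
    exact eq_of_le ((T_le _ _ _ _ _ _ _ _).2 ⟨j1, j2, j3, fun r => hs12 (congrArg u r),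
      fun r => hs13 (congrArg u r), fun r => hs23 (congrArg u r), hs1, hs2, hs3, k12, k13, k23⟩) rfl
  rw [E1, E2]

def fl (e : Bool) (s : Bool × Bool) : Bool × Bool := if e then s.swap else s

theorem C4 {ψ : D → D} (h : Good ψ) (hf : ∀ x, nVerts x ≤ 2 → ψ x = x) (l p q) (hpq : p ≠ q) :
    ∃ e, ∀ s, ψ (tD (!l) l l p q s) = tD (!l) l l p q (fl e s) := by
  have h1 := C2 h hf l p q pp
  have h2 := C2 h hf l p q qq
  have h0 := C2 h hf l p q (false, false)
  have h3 := C2 h hf l p q (true, true)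
  have e0 : ψ (tD (!l) l l p q (false, false)) = tD (!l) l l p q (false, false) := h0.elim id id
  have e3 : ψ (tD (!l) l l p q (true, true)) = tD (!l) l l p q (true, true) := h3.elim id id
  have hne : ψ (tD (!l) l l p q pp) ≠ ψ (tD (!l) l l p q qq) := fun hh =>
    absurd (M_inj _ _ _ _ _ hpq (h.inj hh)) (by decide)
  rcases h1 with h1 | h1 <;> rcases h2 with h2 | h2
  · refine ⟨false, ?_⟩
    rintro ⟨_ | _, _ | _⟩
    exacts [e0, h2, h1, e3]
  · exact absurd (h1.trans h2.symm) hne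
  · exact absurd (h1.trans h2.symm) hne
  · refine ⟨true, ?_⟩
    rintro ⟨_ | _, _ | _⟩
    exacts [e0, h2, h1, e3]

theorem flips_const (e : Bool × Bool → Bool × Bool → Bool)
    (he : ∀ p q r, p ≠ q → p ≠ r → q ≠ r → e p q = e p r ∧ e p r = e q r) :
    ∀ p q, p ≠ q → e p q = e pp qq := by
  have sy : ∀ p q r, p ≠ q → p ≠ r → q ≠ r → e p q = e q p := by
    intro p q r h1 h2 h3
    rw [(he p q r h1 h2 h3).1, (he p q r h1 h2 h3).2, (he q p r h1.symm h3 h2).1]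
  have third : ∀ p q : Bool × Bool, p ≠ q → ∃ r, p ≠ r ∧ q ≠ r := by decide
  have sy' : ∀ p q, p ≠ q → e p q = e q p := by
    intro p q h
    obtain ⟨r, h1, h2⟩ := third p q h
    exact sy p q r h h1 h2
  have step : ∀ p q r, p ≠ q → p ≠ r → e p q = e p r := by
    intro p q r h1 h2
    by_cases h3 : q = r
    · rw [h3]
    · exact (he p q r h1 h2 h3).1
  intro p q h
  by_cases h1 : p = pp
  · subst h1; exact step _ _ _ h (by decide)
  · rw [step p q pp h h1, sy' _ _ h1]
    exact step _ _ _ (Ne.symm h1) (by decide)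

theorem stepC {ψ : D → D} (h : Good ψ) (hf : ∀ x, nVerts x ≤ 2 → ψ x = x) :
    ∃ r, ∀ x, nVerts x ≤ 3 → ψ x = actD false false z r 1 x := by
  have hC4 : ∀ l p q, ∃ e, p ≠ q → ∀ s, ψ (tD (!l) l l p q s) = tD (!l) l l p q (fl e s) := by
    intro l p q
    by_cases hpq : p = q
    · exact ⟨false, fun hh => absurd hpq hh⟩
    · obtain ⟨e, he⟩ := C4 h hf l p q hpq
      exact ⟨e, fun _ => he⟩
  choose e he using hC4
  have hT : ∀ l p q r, p ≠ q → p ≠ r → q ≠ r → ∀ a b c,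
      ψ (tD l l l a b c) = tD l l l (fl (e l p q) a) (fl (e l p r) b) (fl (e l q r) c) :=
    fun l p q r h1 h2 h3 a b c => C3 h hf l p q r h1 h2 h3 _ _ _ _ _ _ (he l p q h1 a)
      (he l p r h2 b) (he l q r h3 c)
  have hc : ∀ l p q, p ≠ q → e l p q = e l pp qq := by
    intro l
    apply flips_const
    intro p q r h1 h2 h3
    have := hT l p q r h1 h2 h3 pp qq pp
    exact cyc_perm l _ _ _ (this.symm.trans (C1 h hf l))
  have htr : ∀ (r : Bool → Bool) l s, tr z r 1 l l s = fl (r l) s := by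
    intro r l s
    rcases s with ⟨_ | _, _ | _⟩ <;> simp [tr, fl]
  have htr' : ∀ (r : Bool → Bool) l m s, l ≠ m → tr z r 1 l m s = s := by
    intro r l m s hlm
    simp [tr, hlm]
  refine ⟨fun l => e l pp qq, fun x hx => ?_⟩
  have hx0 := nV_pos x
  obtain hx1 | hx2 | hx3 : nVerts x = 1 ∨ nVerts x = 2 ∨ nVerts x = 3 := by omega
  · rw [hf x (by omega)]
    obtain ⟨l, rfl⟩ := class1 x hx1
    rw [actD_V, Bool.false_xor]
  · rw [hf x (by omega)]
    obtain ⟨l, m, p, rfl⟩ := class2 x hx2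
    rw [actD_P, Bool.false_xor, Bool.false_xor]
    by_cases hlm : l = m
    · subst hlm
      rw [htr, fl]
      split_ifs
      · exact pD_swap _ _ _
      · rfl
    · rw [htr' _ _ _ _ hlm]
  · obtain ⟨l, p, q, s, rfl | rfl⟩ := class3' x hx3
    · rw [actD_T, Bool.false_xor, Bool.false_xor, htr, htr' _ _ _ _ (by simp), htr' _ _ _ _ (by simp)]
      by_cases hpq : p = q
      · subst hpq
        have h1 : tD (!l) l l p p s.swap = tD (!l) l l p p s := (tD_swap12 _ _ _ _ _ _).symm
        have h2 : ψ (tD (!l) l l p p s) = tD (!l) l l p p s := by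
          have := C2 h hf l p p s
          rw [h1] at this
          exact this.elim id id
        rw [h2, fl]
        split_ifs
        · exact h1.symm
        · rfl
      · rw [he l p q hpq, hc l p q hpq]
    · rw [actD_T, Bool.false_xor, htr, htr, htr]
      rw [hT l pp qq (true, true) (by decide) (by decide) (by decide),
        hc l pp (true, true) (by decide), hc l qq (true, true) (by decide)]

/-! Conclusion -/

theorem main {ψ : D → D} (h : Good ψ) :
    ∃ c t r π, ∀ x, nVerts x ≤ 3 → ψ x = actD c false t r π x := by
  obtain ⟨c, hc⟩ := stepA h
  have cc : ∀ x, actD c c z z 1 (actD c false z z 1 x) = x := fun x => by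
    simpa using actD_inv' c z z 1 x
  have cc' : ∀ x, actD c false z z 1 (actD c c z z 1 x) = x := fun x => by
    simpa using actD_inv c z z 1 x
  have c2 : actD c c z z 1 = actD c false z z 1 := by
    funext x
    obtain ⟨G, rfl⟩ := toD_surj x
    rw [actD_toD, actD_toD, actG, actG]
    congr 2
    apply adj_ext
    · intro u; rw [actA_loop, actA_loop]
    · intro u v huv
      rw [actA_ty _ _ _ _ _ _ _ _ huv, actA_ty _ _ _ _ _ _ _ _ huv]
      rcases ty G.adj u v with ⟨_ | _, _ | _⟩ <;> simp [tr]
  rw [c2] at cc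
  have g1 : Good (actD c false z z 1 ∘ ψ) := (auto_good (actD_auto c z z 1)).comp h
  have v1 : ∀ l, (actD c false z z 1 ∘ ψ) (vD l) = vD l := by
    intro l
    rw [Function.comp, hc, actD_V]; cases c <;> simp
  obtain ⟨t, π, hB⟩ := stepB g1 v1
  have g2 : Good (actD false false t z π⁻¹ ∘ (actD c false z z 1 ∘ ψ)) :=
    (auto_good (actD_auto false t z π⁻¹)).comp g1
  obtain ⟨r, hC⟩ := stepC g2 (by
    intro x hx
    rw [Function.comp, hB x hx, actD_inv'])
  refine ⟨c, t, r, π, fun x hx => ?_⟩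
  rw [← act_comp, ← hC x hx]
  simp only [Function.comp]
  rw [actD_inv, cc]

abbrev Γ := Bool × (Bool → Bool) × (Bool → Bool) × Equiv.Perm (Bool × Bool)

theorem actD_mem (c t r π) (n : ℕ) {x : D} (h : x ∈ Dn n) : actD c false t r π x ∈ Dn n := by
  have : nVerts x ≤ n := h
  rw [← auto_nv (actD_auto c t r π) x] at this
  exact this

def restr (γ : Γ) : ↥(Dn 3) → ↥(Dn 3) :=
  fun x => ⟨actD γ.1 false γ.2.1 γ.2.2.1 γ.2.2.2 x, actD_mem _ _ _ _ 3 x.2⟩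

theorem restr_inj : Function.Injective restr := by
  rintro ⟨c, t, r, π⟩ ⟨c', t', r', π'⟩ hh
  have key : ∀ x, nVerts x ≤ 3 → actD c false t r π x = actD c' false t' r' π' x := by
    intro x hx
    exact congrArg Subtype.val (congrFun hh ⟨x, hx⟩)
  have hc : c = c' := by
    have := key (vD false) (by rw [vD_n]; omega)
    rw [actD_V, actD_V] at this
    simpa using V_ne _ _ this
  subst hc
  have hπ : π = π' := by
    apply Equiv.ext
    intro p
    have := key (pD true false p) (by rw [pD_n]; omega)
    rw [actD_P, actD_P] at this
    rcases P_eq _ _ _ _ this with h1 | ⟨h1, -⟩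
    · simpa [tr] using h1
    · cases c <;> simp at h1
  subst hπ
  have ht : t = t' := by
    funext l
    have := key (pD l l (false, false)) (by rw [pD_n]; omega)
    rw [actD_P, actD_P] at this
    rcases P_eq _ _ _ _ this with h1 | ⟨-, h1⟩
    · simpa [tr] using h1
    · simpa [tr] using h1
  subst ht
  have hr : r = r' := by
    funext l
    have := key (tD (!l) l l pp qq pp) (by rw [tD_n])
    rw [actD_T, actD_T] at this
    have hx : (xor c (!l)) = !(xor c l) := by cases c <;> cases l <;> rfl
    have hm : ∀ r p, tr t r π (!l) l p = tr t r' π (!l) l p := by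
      intro r p; cases l <;> simp [tr]
    rw [hx, hm r, hm r] at this
    have hpq : tr t r' π (!l) l pp ≠ tr t r' π (!l) l qq := by
      intro h1
      have := congrArg (tr t r' π⁻¹ (!l) l) h1
      rw [tr_inv', tr_inv'] at this
      exact absurd this (by decide)
    have h2 := M_inj _ _ _ _ _ hpq this
    revert h2
    cases h3 : r l <;> cases h4 : r' l <;> simp [tr, h3, h4]
  subst hr
  rfl

theorem aut3D4_eq : Aut3D4 = Set.range restr := by
  ext g
  constructor
  · rintro ⟨ψ, hψ, hg⟩
    obtain ⟨c, t, r, π, hm⟩ := main (ext4_good hψ)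
    refine ⟨(c, t, r, π), ?_⟩
    funext x
    apply Subtype.ext
    rw [hg x, ← ext4_mem' ψ x (mem_Dn_succ x.2), hm x x.2]
    rfl
  · rintro ⟨⟨c, t, r, π⟩, rfl⟩
    exact ⟨_, good_restr (auto_good (actD_auto c t r π)), fun x => rfl⟩

theorem aut3D_eq : Aut3D = Set.range restr := by
  ext g
  constructor
  · rintro ⟨φ, hφ, hg⟩
    obtain ⟨c, t, r, π, hm⟩ := main (auto_good hφ)
    refine ⟨(c, t, r, π), ?_⟩
    funext x
    apply Subtype.ext
    rw [hg x, hm x x.2]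
    rfl
  · rintro ⟨⟨c, t, r, π⟩, rfl⟩
    exact ⟨_, actD_auto c t r π, fun x => rfl⟩

end Prf

/-- `Aut₃(D) = Aut₃(D₄)`, and this group has exactly 768 elements. -/
theorem aut3D_eq_aut3D4_card_768 : Aut3D = Aut3D4 ∧ Nat.card ↥Aut3D4 = 768 := by
  refine ⟨Prf.aut3D_eq.trans Prf.aut3D4_eq.symm, ?_⟩
  rw [Prf.aut3D4_eq, Nat.card_range_of_injective Prf.restr_inj, Nat.card_eq_fintype_card]
  simp [Fintype.card_perm, Nat.factorial]
end
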